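/- arXiv:1805.08085 — 2 statements merged into one kernel-verified Lean document; each statement's English description precedes it below -/
import Mathlib

section
/- Let A be an artin algebra with Jacobson radical J and Loewy length m ≥ 2, and let B = End_A(⊕_{j=1}^m A/J^j) be the ADR algebra of A. Then the global dimension of B equals 2 if and only if J ∈ add(⊕_{j=1}^m A/J^j), i.e. the radical of A is a direct summand of a finite direct sum of copies of the modules A/J^j. -/
/-- The Jacobson radical of a ring `A`. -/
def jacobsonRad (A : Type) [Ring A] : Ideal A := Ideal.jacobson ⊥

/-- The submodule `I • N` (span of products), valid over noncommutative rings. -/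
def smulSub {A : Type} [Ring A] (I : Ideal A) {M : Type} [AddCommGroup M] [Module A M]
    (N : Submodule A M) : Submodule A M :=
  Submodule.span A {x | ∃ a ∈ I, ∃ y ∈ N, x = a • y}

/-- `radPow A M n` is the submodule `M J(A)^n` (written for left modules: `J(A)^n M`). -/
def radPow (A : Type) [Ring A] (M : Type) [AddCommGroup M] [Module A M] : ℕ → Submodule A M
  | 0 => ⊤
  | n + 1 => smulSub (jacobsonRad A) (radPow A M n)

lemma radPow_succ_le (A : Type) [Ring A] (M : Type) [AddCommGroup M] [Module A M] (n : ℕ) :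
    radPow A M (n + 1) ≤ radPow A M n := by
  show smulSub (jacobsonRad A) (radPow A M n) ≤ radPow A M n
  rw [smulSub, Submodule.span_le]
  rintro x ⟨a, _, y, hy, rfl⟩
  exact Submodule.smul_mem _ a hy

lemma radPow_le_one (A : Type) [Ring A] (M : Type) [AddCommGroup M] [Module A M]
    {j : ℕ} (hj : 1 ≤ j) : radPow A M j ≤ radPow A M 1 := by
  induction j with
  | zero => omega
  | succ n ih =>
    rcases Nat.lt_or_ge 1 (n+1) with h | h
    · exact le_trans (radPow_succ_le A M n) (ih (by omega))
    · have : n + 1 = 1 := by omega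
      rw [this]

/-- `X` belongs to `add M`: it is a direct summand of a finite direct sum of copies of `M`. -/
def InAdd (A : Type) [Ring A] (M : Type) [AddCommGroup M] [Module A M]
    (X : Type) [AddCommGroup X] [Module A X] : Prop :=
  ∃ (n : ℕ) (Y : Type) (_ : AddCommGroup Y) (_ : Module A Y),
    Nonempty ((X × Y) ≃ₗ[A] (Fin n → M))

/-- `f` lies in the Jacobson radical of the category of `A`-modules. -/
def IsRadMor (A : Type) [Ring A] {M N : Type} [AddCommGroup M] [Module A M]
    [AddCommGroup N] [Module A N] (f : M →ₗ[A] N) : Prop :=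
  ∀ g : N →ₗ[A] M, IsUnit ((1 : Module.End A M) - (g ∘ₗ f : Module.End A M))

/-- The ADR module `⊕_{j=1}^m A/J^j`. -/
abbrev ADRModule (A : Type) [Ring A] (m : ℕ) : Type :=
  ∀ j : Fin m, A ⧸ radPow A A (j.1 + 1)

/-- Global dimension at most one: every submodule of a projective module is projective. -/
def GlDimLE1 (B : Type) [Ring B] : Prop :=
  ∀ (P : Type) [AddCommGroup P] [Module B P], Module.Projective B P →
    ∀ N : Submodule B P, Module.Projective B ↥N

/-- Global dimension at most two: the kernel of any morphism between projective modules
is projective. -/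
def GlDimLE2 (B : Type) [Ring B] : Prop :=
  ∀ (P Q : Type) [AddCommGroup P] [Module B P] [AddCommGroup Q] [Module B Q],
    Module.Projective B P → Module.Projective B Q →
      ∀ f : P →ₗ[B] Q, Module.Projective B ↥(LinearMap.ker f)

section RingPart

variable {B : Type} [Ring B]

lemma adr_semisimple_quot [IsSemiprimaryRing B] (P : Type) [AddCommGroup P] [Module B P] :
    IsSemisimpleModule B (P ⧸ (Ring.jacobson B • (⊤ : Submodule B P))) := by
  have h : Module.IsTorsionBySet B (P ⧸ (Ring.jacobson B • (⊤ : Submodule B P)))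
      (Ring.jacobson B : Set B) := by
    rw [Module.isTorsionBySet_quotient_iff]
    exact fun m i hi ↦ Submodule.smul_mem_smul hi trivial
  let _ := h.module
  exact h.isSemisimpleModule_iff.1 inferInstance

lemma adr_nilp [IsSemiprimaryRing B] {W : Type} [AddCommGroup W] [Module B W]
    (n : W →ₗ[B] W) (hn : ∀ w, n w ∈ Ring.jacobson B • (⊤ : Submodule B W)) :
    IsNilpotent (n : Module.End B W) := by
  obtain ⟨k, hk⟩ := IsSemiprimaryRing.isNilpotent (R := B)
  have key : ∀ k : ℕ, LinearMap.range ((n : Module.End B W) ^ k) ≤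
      (Ring.jacobson B ^ k) • (⊤ : Submodule B W) := by
    intro k
    induction k with
    | zero => simp [Submodule.pow_zero, Ideal.one_eq_top]
    | succ k ih =>
      rw [Submodule.pow_succ, pow_succ', Module.End.mul_eq_comp, LinearMap.range_comp]
      have h1 : LinearMap.range n ≤ Ring.jacobson B • (⊤ : Submodule B W) := by
        rintro _ ⟨w, rfl⟩; exact hn w
      refine (Submodule.map_mono ih).trans ?_
      rw [Submodule.map_smul'', Submodule.mul_smul]
      refine Submodule.smul_mono le_rfl ?_
      rw [Submodule.map_top]; exact h1
  refine ⟨k, ?_⟩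
  have := key k
  rw [hk] at this
  rw [← LinearMap.range_eq_bot, eq_bot_iff]
  simpa using this

lemma adr_retract [IsSemiprimaryRing B] {P : Type} [AddCommGroup P] [Module B P]
    [Module.Projective B P] (W : Submodule B P)
    (h : W ⊓ Ring.jacobson B • (⊤ : Submodule B P) ≤ Ring.jacobson B • W) :
    ∃ g : P →ₗ[B] W, ∀ w : W, g w = w := by
  set R := Ring.jacobson B • (⊤ : Submodule B P) with hR
  have ss := adr_semisimple_quot (B := B) P
  set W' := W.map R.mkQ with hW'
  obtain ⟨C, hC⟩ := exists_isCompl W'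
  let q := W'.projectionOnto C hC
  let ρ : W →ₗ[B] W' := R.mkQ.submoduleMap W
  have hρ : Function.Surjective ρ := R.mkQ.submoduleMap_surjective W
  obtain ⟨g0, hg0⟩ := Module.projective_lifting_property ρ (q ∘ₗ R.mkQ) hρ
  have hg1 : ∀ w : W, (w : P) - g0 w ∈ Ring.jacobson B • W := by
    intro w
    apply h
    refine ⟨W.sub_mem w.2 (g0 w).2, ?_⟩
    have e1 : ρ (g0 w) = q (R.mkQ w) := LinearMap.congr_fun hg0 w
    have e2 : q (R.mkQ w) = ⟨R.mkQ w, Submodule.mem_map_of_mem w.2⟩ :=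
      Submodule.projectionOnto_apply_left hC ⟨R.mkQ w, Submodule.mem_map_of_mem w.2⟩
    have e3 : R.mkQ (g0 w) = R.mkQ w := by
      have := congrArg Subtype.val (e1.trans e2)
      exact this
    have : R.mkQ ((w : P) - g0 w) = 0 := by rw [map_sub, e3, sub_self]
    rwa [Submodule.mkQ_apply, Submodule.Quotient.mk_eq_zero] at this
  let n : Module.End B W := 1 - g0 ∘ₗ W.subtype
  have hn : IsNilpotent n := by
    apply adr_nilp
    intro w
    rw [Submodule.mem_smul_top_iff]
    exact hg1 w
  have hu := hn.isUnit_one_sub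
  have e : (1 : Module.End B W) - n = g0 ∘ₗ W.subtype := by simp [n]
  rw [e] at hu
  obtain ⟨u, hu⟩ := hu
  refine ⟨(↑u⁻¹ : Module.End B W) ∘ₗ g0, fun w => ?_⟩
  have : (↑u⁻¹ * ↑u : Module.End B W) = 1 := u.inv_mul
  rw [hu] at this
  exact LinearMap.congr_fun this w

lemma adr_proj_of_retract {P V : Type} [AddCommGroup P] [Module B P] [AddCommGroup V] [Module B V]
    [Module.Projective B P] (π : P →ₗ[B] V) (hπ : Function.Surjective π)
    (g : P →ₗ[B] LinearMap.ker π) (hg : ∀ w : LinearMap.ker π, g w = w) :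
    Module.Projective B V := by
  let d : P →ₗ[B] P := LinearMap.id - (LinearMap.ker π).subtype ∘ₗ g
  have hd : LinearMap.ker π ≤ LinearMap.ker d := by
    intro w hw
    have := congrArg Subtype.val (hg ⟨w, hw⟩)
    simp only [LinearMap.mem_ker, d, LinearMap.sub_apply, LinearMap.id_apply,
      LinearMap.comp_apply, Submodule.subtype_apply]
    rw [sub_eq_zero]; exact this.symm
  let σ : V →ₗ[B] P := (LinearMap.ker π).liftQ d hd ∘ₗ
    (π.quotKerEquivOfSurjective hπ).symm.toLinearMap
  refine Module.Projective.of_split σ π ?_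
  ext v
  obtain ⟨p, rfl⟩ := hπ v
  have : (π.quotKerEquivOfSurjective hπ).symm (π p) = (LinearMap.ker π).mkQ p := by
    rw [LinearEquiv.symm_apply_eq]; rfl
  simp only [σ, LinearMap.comp_apply, LinearEquiv.coe_coe, this, LinearMap.id_apply]
  simp [d]

/-- matrices: if `rad B` is generated as a right ideal by `b i` with the module of relations
projective (witnessed by `C`, `E`), then the kernels of maps between projective left modules
are projective. -/
lemma adr_glDimLE2 [IsSemiprimaryRing B] {ι κ : Type} [Fintype ι] [Fintype κ]
    (b : ι → B) (C : ι → κ → B) (E : κ → κ → B)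
    (hb : ∀ i, b i ∈ Ring.jacobson B)
    (h1 : ∀ x ∈ Ring.jacobson B, ∃ c : ι → B, x = ∑ i, b i * c i)
    (h2 : ∀ k, ∑ i, b i * C i k = 0)
    (h3 : ∀ c : ι → B, ∑ i, b i * c i = 0 → ∃ z : κ → B, ∀ i, c i = ∑ k, C i k * z k)
    (h4 : ∀ i k, C i k = ∑ l, C i l * E l k)
    (h5 : ∀ z : κ → B, (∀ i, ∑ k, C i k * z k = 0) → ∀ l, ∑ k, E l k * z k = 0) :
    GlDimLE2 B := by
  intro P Q _ _ _ _ hP hQ f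
  -- exactness for projective modules
  have x3 : ∀ c : ι → P, ∑ i, b i • c i = 0 → ∃ z : κ → P, ∀ i, c i = ∑ k, C i k • z k := by
    intro c hc
    obtain ⟨s, hs⟩ := hP
    have h : ∀ p : P, ∑ i, b i * (s (c i) p) = 0 := by
      intro p
      have := congrArg (fun v => v p) (congrArg s hc)
      simpa [map_sum, Finsupp.finsetSum_apply] using this
    choose z hz using fun p => h3 _ (h p)
    classical
    let T : Finset P := Finset.univ.biUnion (fun i => (s (c i)).support)
    refine ⟨fun k => ∑ p ∈ T, z p k • p, fun i => ?_⟩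
    rw [← hs (c i), Finsupp.linearCombination_apply, Finsupp.sum_of_support_subset (s := T)]
    · simp_rw [Finset.smul_sum]
      rw [Finset.sum_comm]
      refine Finset.sum_congr rfl fun p _ => ?_
      rw [hz p i, Finset.sum_smul]
      simp [mul_smul]
    · exact Finset.subset_biUnion_of_mem (fun i => (s (c i)).support) (Finset.mem_univ i)
    · simp
  have x5 : ∀ z : κ → Q, (∀ i, ∑ k, C i k • z k = 0) → ∀ l, ∑ k, E l k • z k = 0 := by
    intro z hz l
    obtain ⟨s, hs⟩ := hQ
    have h : ∀ p : Q, ∀ i, ∑ k, C i k * (s (z k) p) = 0 := by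
      intro p i
      have := congrArg (fun v => v p) (congrArg s (hz i))
      simpa [map_sum, Finsupp.finsetSum_apply] using this
    have h' : s (∑ k, E l k • z k) = 0 := by
      ext p
      have := h5 _ (h p) l
      simpa [map_sum, Finsupp.finsetSum_apply] using this
    rw [← hs (∑ k, E l k • z k), h', map_zero]
  -- exactness for the kernel
  set V := LinearMap.ker f with hV
  have xV : ∀ c : ι → V, ∑ i, b i • c i = 0 → ∃ z : κ → V, ∀ i, c i = ∑ k, C i k • z k := by
    intro c hc
    obtain ⟨z, hz⟩ := x3 (fun i => (c i : P)) (by simpa using congrArg Subtype.val hc)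
    have hfz : ∀ l, ∑ k, E l k • f (z k) = 0 := by
      apply x5
      intro i
      have : f (c i) = 0 := (c i).2
      rw [hz i] at this
      simpa using this
    refine ⟨fun l => ⟨∑ k, E l k • z k, ?_⟩, fun i => ?_⟩
    · rw [hV, LinearMap.mem_ker]; simpa using hfz l
    · apply Subtype.ext
      rw [hz i]
      simp only [AddSubmonoidClass.coe_finsetSum, Submodule.coe_smul, Finset.smul_sum]
      rw [Finset.sum_comm]
      refine Finset.sum_congr rfl fun k _ => ?_
      rw [h4 i k, Finset.sum_smul]
      simp [mul_smul]
  -- free cover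
  let π : (V →₀ B) →ₗ[B] V := Finsupp.linearCombination B id
  have hπ : Function.Surjective π := fun v => ⟨Finsupp.single v 1, by simp [π]⟩
  obtain ⟨g, hg⟩ := adr_retract (B := B) (LinearMap.ker π) (by
    rintro w ⟨hw, hw'⟩
    have : ∃ q : ι → (V →₀ B), w = ∑ i, b i • q i := by
      refine Submodule.smul_induction_on hw' ?_ ?_
      · intro r hr n _
        obtain ⟨c, rfl⟩ := h1 r hr
        exact ⟨fun i => c i • n, by simp [Finset.sum_smul, mul_smul]⟩
      · rintro x y ⟨q, rfl⟩ ⟨q', rfl⟩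
        exact ⟨q + q', by simp [Finset.sum_add_distrib]⟩
    obtain ⟨q, rfl⟩ := this
    have hw0 : π (∑ i, b i • q i) = 0 := hw
    obtain ⟨z, hz⟩ := xV (fun i => π (q i)) (by rw [map_sum] at hw0; simpa using hw0)
    choose t ht using fun k => hπ (z k)
    have hsum : ∑ i, b i • q i = ∑ i, b i • (q i - ∑ k, C i k • t k) := by
      simp only [smul_sub, Finset.sum_sub_distrib, Finset.smul_sum]
      rw [Finset.sum_comm]
      have : ∀ k, ∑ i, b i • C i k • t k = 0 := by
        intro k
        simp_rw [← mul_smul]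
        rw [← Finset.sum_smul, h2, zero_smul]
      simp [this]
    rw [hsum]
    refine Submodule.sum_mem _ fun i _ => Submodule.smul_mem_smul (hb i) ?_
    rw [LinearMap.mem_ker, map_sub, hz i, map_sum]
    simp [ht])
  exact adr_proj_of_retract π hπ g hg

end RingPart
section RetPart

/-- `X` is a retract of a finite power of `M`. -/
def AdrRet (A : Type) [Ring A] (M : Type) [AddCommGroup M] [Module A M]
    (X : Type) [AddCommGroup X] [Module A X] : Prop :=
  ∃ (κ : Type) (_ : Fintype κ) (s : X →ₗ[A] (κ → M)) (t : (κ → M) →ₗ[A] X),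
    ∀ x, t (s x) = x

variable {A : Type} [Ring A] {M : Type} [AddCommGroup M] [Module A M]
  {X Y : Type} [AddCommGroup X] [Module A X] [AddCommGroup Y] [Module A Y]

lemma AdrRet.of_retract (hX : AdrRet A M X) (s : Y →ₗ[A] X) (t : X →ₗ[A] Y)
    (h : ∀ y, t (s y) = y) : AdrRet A M Y := by
  obtain ⟨κ, hκ, s', t', h'⟩ := hX
  exact ⟨κ, hκ, s' ∘ₗ s, t ∘ₗ t', fun y => by simp [h', h]⟩

lemma AdrRet.self : AdrRet A M M :=
  ⟨Unit, inferInstance, LinearMap.pi fun _ => LinearMap.id, LinearMap.proj (), fun y => by simp⟩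

lemma AdrRet.zero [Subsingleton X] : AdrRet A M X :=
  ⟨Unit, inferInstance, 0, 0, fun _ => Subsingleton.elim _ _⟩

lemma AdrRet.prod (hX : AdrRet A M X) (hY : AdrRet A M Y) : AdrRet A M (X × Y) := by
  obtain ⟨κ, hκ, s, t, h⟩ := hX
  obtain ⟨κ', hκ', s', t', h'⟩ := hY
  refine ⟨κ ⊕ κ', inferInstance,
    LinearMap.pi (Sum.elim (fun i => LinearMap.proj i ∘ₗ s ∘ₗ LinearMap.fst A X Y)
      (fun i => LinearMap.proj i ∘ₗ s' ∘ₗ LinearMap.snd A X Y)),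
    LinearMap.prod (t ∘ₗ LinearMap.funLeft A M Sum.inl) (t' ∘ₗ LinearMap.funLeft A M Sum.inr), ?_⟩
  rintro ⟨x, y⟩
  refine Prod.ext ?_ ?_
  · exact h x
  · exact h' y

lemma AdrRet.pi {ι : Type} [Fintype ι] {Z : ι → Type} [∀ i, AddCommGroup (Z i)]
    [∀ i, Module A (Z i)] (hZ : ∀ i, AdrRet A M (Z i)) : AdrRet A M (∀ i, Z i) := by
  choose κ hκ s t h using hZ
  refine ⟨(i : ι) × κ i, inferInstance,
    LinearMap.pi (fun p => LinearMap.proj p.2 ∘ₗ s p.1 ∘ₗ LinearMap.proj p.1),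
    LinearMap.pi (fun i => t i ∘ₗ LinearMap.funLeft A M (fun k => ⟨i, k⟩)), ?_⟩
  intro z
  ext i
  exact h i (z i)

lemma adr_sum_single {κ : Type} [Fintype κ] [DecidableEq κ] (L : (κ → M) →ₗ[A] Y) (w : κ → M) :
    ∑ k, L (LinearMap.single A (fun _ => M) k (w k)) = L w := by
  rw [← map_sum]
  congr 1
  exact LinearMap.sum_single_apply (fun _ : κ => M) w

lemma adr_glDimLE2_of_ret [IsSemiprimaryRing (Module.End A M)] (hX : AdrRet A M X)
    (b : X →ₗ[A] M) (hK : AdrRet A M (LinearMap.ker b))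
    (hr : ∀ x : Module.End A M, x ∈ Ring.jacobson (Module.End A M) ↔
      ∃ g : M →ₗ[A] X, x = b ∘ₗ g) : GlDimLE2 (Module.End A M) := by
  classical
  obtain ⟨ι, hι, s, t, hst⟩ := id hX
  let b' : (ι → M) →ₗ[A] M := b ∘ₗ t
  have hpow : AdrRet A M (ι → M) := ⟨ι, hι, LinearMap.id, LinearMap.id, fun _ => rfl⟩
  have hK' : AdrRet A M (LinearMap.ker b') := by
    have hm1 : ∀ u : ι → M, u - s (t u) ∈ LinearMap.ker b' := by
      intro u; simp [b', hst]
    have hm2 : ∀ k : LinearMap.ker b, s k ∈ LinearMap.ker b' := by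
      intro k; simp [b', hst]
    let σ : LinearMap.ker b' →ₗ[A] (ι → M) × LinearMap.ker b :=
      LinearMap.prod (LinearMap.ker b').subtype
        (LinearMap.codRestrict _ (t ∘ₗ (LinearMap.ker b').subtype) (fun w => w.2))
    let τ1 : (ι → M) →ₗ[A] LinearMap.ker b' :=
      LinearMap.codRestrict _ (LinearMap.id - s ∘ₗ t) hm1
    let τ2 : LinearMap.ker b →ₗ[A] LinearMap.ker b' :=
      LinearMap.codRestrict _ (s ∘ₗ (LinearMap.ker b).subtype) hm2
    refine (hpow.prod hK).of_retract σ (τ1.coprod τ2) fun w => ?_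
    apply Subtype.ext
    exact sub_add_cancel (w : ι → M) (s (t w))
  obtain ⟨κ, hκ, s', t', hst'⟩ := hK'
  let inc := (LinearMap.ker b').subtype
  have hsum : ∀ {η : Type} [Fintype η] (v : η → Module.End A M) (y : M),
      (∑ i, v i) y = ∑ i, v i y := fun v y => LinearMap.sum_apply _ _ _
  refine adr_glDimLE2 (ι := ι) (κ := κ) (fun i => b' ∘ₗ LinearMap.single A (fun _ => M) i)
    (fun i k => LinearMap.proj i ∘ₗ inc ∘ₗ t' ∘ₗ LinearMap.single A (fun _ => M) k)
    (fun l k => LinearMap.proj l ∘ₗ s' ∘ₗ t' ∘ₗ LinearMap.single A (fun _ => M) k)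
    ?_ ?_ ?_ ?_ ?_ ?_
  · intro i
    rw [hr]
    exact ⟨t ∘ₗ LinearMap.single A (fun _ => M) i, rfl⟩
  · intro x hx
    obtain ⟨g, rfl⟩ := (hr x).1 hx
    refine ⟨fun i => LinearMap.proj i ∘ₗ s ∘ₗ g, ?_⟩
    refine LinearMap.ext fun y => ?_
    rw [hsum]
    exact ((adr_sum_single b' (s (g y))).trans (congrArg b (hst _))).symm
  · intro k
    refine LinearMap.ext fun y => ?_
    rw [hsum]
    exact (adr_sum_single b' (inc (t' (LinearMap.single A (fun _ => M) k y)))).trans (t' _).2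
  · intro c hc
    have hmem : ∀ y, LinearMap.pi c y ∈ LinearMap.ker b' := by
      intro y
      have := LinearMap.congr_fun hc y
      rw [hsum] at this
      exact (adr_sum_single b' (LinearMap.pi c y)).symm.trans this
    let cc : M →ₗ[A] LinearMap.ker b' := LinearMap.codRestrict _ (LinearMap.pi c) hmem
    refine ⟨fun k => LinearMap.proj k ∘ₗ s' ∘ₗ cc, fun i => ?_⟩
    refine LinearMap.ext fun y => ?_
    rw [hsum]
    refine Eq.trans ?_ (adr_sum_single (LinearMap.proj i ∘ₗ inc ∘ₗ t') (s' (cc y))).symm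
    simp [hst', cc, inc]
  · intro i k
    refine LinearMap.ext fun y => ?_
    rw [hsum]
    refine Eq.trans ?_ (adr_sum_single (LinearMap.proj i ∘ₗ inc ∘ₗ t')
      (s' (t' (LinearMap.single A (fun _ => M) k y)))).symm
    simp [hst']
  · intro z hz l
    refine LinearMap.ext fun y => ?_
    rw [hsum]
    refine (adr_sum_single (LinearMap.proj l ∘ₗ s' ∘ₗ t') (fun k => z k y)).trans ?_
    have : t' (fun k => z k y) = 0 := by
      apply Subtype.ext
      ext i
      have := LinearMap.congr_fun (hz i) y
      rw [hsum] at this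
      exact (adr_sum_single (LinearMap.proj i ∘ₗ inc ∘ₗ t') (fun k => z k y)).symm.trans this
    simp [this]

end RetPart
section APart

variable {A : Type} [Ring A]

lemma adr_jac_eq : jacobsonRad A = Ring.jacobson A := Ideal.jacobson_bot

lemma adr_jac_mul_right {x : A} (hx : x ∈ jacobsonRad A) (a : A) : x * a ∈ jacobsonRad A := by
  rw [adr_jac_eq] at hx ⊢
  exact Ideal.mul_mem_right a _ hx

lemma adr_rp_mul_right {n : ℕ} {x : A} (hx : x ∈ radPow A A n) (a : A) :
    x * a ∈ radPow A A n := by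
  induction n generalizing x with
  | zero => trivial
  | succ n ih =>
    change x ∈ Submodule.span A _ at hx
    refine Submodule.span_induction ?_ ?_ ?_ ?_ hx
    · rintro _ ⟨c, hc, y, hy, rfl⟩
      refine Submodule.subset_span ⟨c, hc, y * a, ih hy, ?_⟩
      simp [mul_assoc]
    · simp
    · intro x y _ _ hx hy; rw [add_mul]; exact Submodule.add_mem _ hx hy
    · intro c x _ hx
      rw [smul_mul_assoc]; exact Submodule.smul_mem _ c hx

lemma adr_rp_one : radPow A A 1 = jacobsonRad A := by
  apply le_antisymm
  · refine Submodule.span_le.2 ?_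
    rintro _ ⟨c, hc, y, hy, rfl⟩
    exact adr_jac_mul_right hc y
  · intro x hx
    exact Submodule.subset_span ⟨x, hx, 1, trivial, by simp⟩

lemma adr_rp_mul {k l : ℕ} {x y : A} (hx : x ∈ radPow A A k) (hy : y ∈ radPow A A l) :
    x * y ∈ radPow A A (l + k) := by
  induction k generalizing x with
  | zero => exact Submodule.smul_mem _ x hy
  | succ n ih =>
    change x ∈ Submodule.span A _ at hx
    refine Submodule.span_induction ?_ ?_ ?_ ?_ hx
    · rintro _ ⟨c, hc, z, hz, rfl⟩
      refine Submodule.subset_span ⟨c, hc, z * y, ih hz, ?_⟩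
      simp [mul_assoc]
    · simp
    · intro x z _ _ hx hz; rw [add_mul]; exact Submodule.add_mem _ hx hz
    · intro c x _ hx
      rw [smul_mul_assoc]; exact Submodule.smul_mem _ c hx

lemma adr_rp_anti {k l : ℕ} (h : k ≤ l) : radPow A A l ≤ radPow A A k :=
  antitone_nat_of_succ_le (fun n => radPow_succ_le A A n) h

lemma adr_rp_pow {x : A} (hx : x ∈ radPow A A 1) (n : ℕ) : x ^ n ∈ radPow A A n := by
  induction n with
  | zero => trivial
  | succ n ih => rw [pow_succ']; exact adr_rp_mul hx ih

lemma adr_isNilpotent {m : ℕ} (hA : radPow A A m = ⊥) {x : A} (hx : x ∈ radPow A A 1) :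
    IsNilpotent x := ⟨m, by have := adr_rp_pow hx m; rw [hA] at this; simpa using this⟩

lemma adr_mem_jac_of_nil {R : Type} [Ring R] {t : R} (h : ∀ y : R, IsNilpotent (y * t)) :
    t ∈ Ring.jacobson R := by
  rw [← Ideal.jacobson_bot, Ideal.mem_jacobson_iff]
  intro y
  obtain ⟨u, hu⟩ := (h y).isUnit_add_one
  refine ⟨↑u⁻¹, ?_⟩
  have : (↑u⁻¹ * ↑u : R) = 1 := u.inv_mul
  rw [hu, mul_add, mul_one, ← mul_assoc] at this
  simp [this]

lemma adr_nil_of_mem_jac {R : Type} [Ring R] [IsSemiprimaryRing R] {t : R}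
    (h : t ∈ Ring.jacobson R) : IsNilpotent t := by
  obtain ⟨k, hk⟩ := IsSemiprimaryRing.isNilpotent (R := R)
  refine ⟨k, ?_⟩
  have := Ideal.pow_mem_pow h k
  rw [hk] at this
  simpa using this

/-- the map `A/J^k → X` sending the class of `1` to `x`. -/
def adrEv (k : ℕ) {X : Type} [AddCommGroup X] [Module A X] (x : X)
    (h : ∀ a ∈ radPow A A k, a • x = 0) : (A ⧸ radPow A A k) →ₗ[A] X :=
  (radPow A A k).liftQ (LinearMap.toSpanSingleton A X x) (fun a ha => h a ha)

lemma adrEv_mk (k : ℕ) {X : Type} [AddCommGroup X] [Module A X] (x : X)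
    (h : ∀ a ∈ radPow A A k, a • x = 0) (a : A) :
    adrEv k x h ((radPow A A k).mkQ a) = a • x := rfl

lemma adr_smul_mk (k : ℕ) (a b : A) :
    a • (radPow A A k).mkQ b = (radPow A A k).mkQ (a * b) := rfl

lemma adr_mk_eq (k : ℕ) (a : A) :
    (radPow A A k).mkQ a = a • (radPow A A k).mkQ 1 := by rw [adr_smul_mk, mul_one]

lemma adr_mk_zero {k : ℕ} {a : A} : (radPow A A k).mkQ a = 0 ↔ a ∈ radPow A A k := by
  rw [Submodule.mkQ_apply, Submodule.Quotient.mk_eq_zero]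

lemma adr_kill {k l : ℕ} (h : l ≤ k) (y : A ⧸ radPow A A l) :
    ∀ a ∈ radPow A A k, a • y = 0 := by
  intro a ha
  obtain ⟨c, rfl⟩ := (radPow A A l).mkQ_surjective y
  rw [adr_smul_mk, adr_mk_zero]
  exact adr_rp_anti h (adr_rp_mul_right ha c)

lemma adr_exists_F [IsSemiprimaryRing A] {m : ℕ} (hA : radPow A A m = ⊥) (a : ℕ) :
    ∃ e : A, (∀ x ∈ radPow A A a, x * e = 0) ∧
      ∀ x : A, (∀ y ∈ radPow A A a, y * x ∈ radPow A A (a + 1)) →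
        x * (1 - e) ∈ radPow A A 1 := by
  let N : Submodule A A :=
    { carrier := {x | ∀ y ∈ radPow A A a, y * x ∈ radPow A A (a + 1)}
      add_mem' := fun {x x'} hx hx' y hy => by
        rw [mul_add]; exact Submodule.add_mem _ (hx y hy) (hx' y hy)
      zero_mem' := fun y hy => by simp
      smul_mem' := fun c x hx y hy => by
        rw [smul_eq_mul, ← mul_assoc]; exact hx _ (adr_rp_mul_right hy c) }
  set R := Ring.jacobson A • (⊤ : Submodule A A) with hR
  have hRJ : R ≤ radPow A A 1 := by
    rw [hR, Submodule.smul_le]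
    intro r hr n _
    rw [← adr_jac_eq, ← adr_rp_one] at hr
    exact adr_rp_mul_right hr n
  have ss := adr_semisimple_quot (B := A) A
  obtain ⟨C, hC⟩ := exists_isCompl (N.map R.mkQ)
  let q := (N.map R.mkQ).projectionOnto C hC
  obtain ⟨e, heN, he⟩ := (q (R.mkQ 1)).2
  have key : ∀ x ∈ N, x * (1 - e) ∈ radPow A A 1 := by
    intro x hx
    have e2 : q (R.mkQ x) = ⟨R.mkQ x, Submodule.mem_map_of_mem hx⟩ :=
      Submodule.projectionOnto_apply_left hC ⟨R.mkQ x, Submodule.mem_map_of_mem hx⟩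
    have e3 : R.mkQ x = x • R.mkQ 1 := by rw [← map_smul]; simp
    have e4 : (q (R.mkQ x) : A ⧸ R) = x • R.mkQ e := by
      rw [e3, map_smul, Submodule.coe_smul, he]
    rw [e2, ← map_smul] at e4
    have e5 : R.mkQ x = R.mkQ (x * e) := e4
    apply hRJ
    rw [← sub_eq_zero, ← map_sub, Submodule.mkQ_apply, Submodule.Quotient.mk_eq_zero] at e5
    rwa [mul_sub, mul_one]
  have hpow : ∀ k x, x ∈ radPow A A a → x * e ^ k ∈ radPow A A (a + k) := by
    have step : ∀ c d : ℕ, ∀ x ∈ radPow A A (a + c), x * e ∈ radPow A A (a + c + 1) := by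
      intro c _
      induction c with
      | zero => exact heN
      | succ c ih =>
        intro x hx
        change x ∈ Submodule.span A _ at hx
        refine Submodule.span_induction ?_ ?_ ?_ ?_ hx
        · rintro _ ⟨r, hr, z, hz, rfl⟩
          refine Submodule.subset_span ⟨r, hr, z * e, ih z hz, ?_⟩
          simp [mul_assoc]
        · simp
        · intro x z _ _ hx hz; rw [add_mul]; exact Submodule.add_mem _ hx hz
        · intro c x _ hx
          rw [smul_mul_assoc]; exact Submodule.smul_mem _ c hx
    intro k
    induction k with
    | zero => intro x hx; simpa using hx
    | succ k ih =>
      intro x hx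
      rw [pow_succ, ← mul_assoc]
      exact step k 0 _ (ih x hx)
  refine ⟨e ^ m, fun x hx => ?_, fun x hx => ?_⟩
  · have := adr_rp_anti (Nat.le_add_left m a) (hpow m x hx)
    rw [hA] at this
    simpa using this
  · have : (1 - e ^ m) = (1 - e) * ∑ i ∈ Finset.range m, e ^ i := by
      rw [mul_neg_geom_sum]
    rw [this, ← mul_assoc]
    exact adr_rp_mul_right (key x hx) _

end APart
section MPart

variable {A : Type} [Ring A] {m : ℕ}

/-- the inclusion of the `k`-th summand of the ADR module, applied to the class of `a`. -/
def adrIn (k : Fin m) (a : A) : ADRModule A m :=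
  LinearMap.single A (fun j : Fin m => A ⧸ radPow A A (j.1 + 1)) k ((radPow A A (k.1 + 1)).mkQ a)

lemma adrIn_same (k : Fin m) (a : A) : adrIn k a k = (radPow A A (k.1 + 1)).mkQ a := by
  simp [adrIn]

lemma adrIn_ne {k j : Fin m} (h : j ≠ k) (a : A) : adrIn k a j = 0 := by
  simp [adrIn, h]

lemma adrIn_smul (k : Fin m) (a b : A) : a • adrIn k b = adrIn k (a * b) := by
  rw [adrIn, adrIn, ← map_smul]; rfl

lemma adrIn_eq (k : Fin m) (a : A) : adrIn k a = a • adrIn k 1 := by rw [adrIn_smul, mul_one]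

lemma adr_map_in {X : Type} [AddCommGroup X] [Module A X] (f : ADRModule A m →ₗ[A] X)
    (k : Fin m) (a : A) : f (adrIn k a) = a • f (adrIn k 1) := by
  rw [adrIn_eq, map_smul]

lemma adrIn_eq_zero {k : Fin m} {a : A} : adrIn k a = 0 ↔ a ∈ radPow A A (k.1 + 1) := by
  rw [← adr_mk_zero]
  constructor
  · intro h; rw [← adrIn_same, h]; rfl
  · intro h; rw [adrIn, h, map_zero]

lemma adr_sum_in (z : ADRModule A m) (c : Fin m → A)
    (hc : ∀ j, (radPow A A (j.1 + 1)).mkQ (c j) = z j) : z = ∑ k, adrIn k (c k) := by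
  have : ∀ k, adrIn k (c k) =
      LinearMap.single A (fun j : Fin m => A ⧸ radPow A A (j.1 + 1)) k (z k) := by
    intro k; rw [adrIn, hc]
  simp_rw [this]
  exact (LinearMap.sum_single_apply (fun j : Fin m => A ⧸ radPow A A (j.1 + 1)) z).symm

/-- the filtration `J^k M`. -/
def adrFil (m : ℕ) (k : ℕ) : Submodule A (ADRModule A m) where
  carrier := {z | ∀ j : Fin m, ∃ a ∈ radPow A A k, z j = (radPow A A (j.1 + 1)).mkQ a}
  add_mem' := by
    intro z w hz hw j
    obtain ⟨a, ha, ha'⟩ := hz j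
    obtain ⟨b, hb, hb'⟩ := hw j
    exact ⟨a + b, Submodule.add_mem _ ha hb, by rw [map_add, ← ha', ← hb']; rfl⟩
  zero_mem' := fun j => ⟨0, Submodule.zero_mem _, by simp⟩
  smul_mem' := by
    intro c z hz j
    obtain ⟨a, ha, ha'⟩ := hz j
    exact ⟨c • a, Submodule.smul_mem _ c ha, by rw [map_smul, ← ha']; rfl⟩

lemma adrFil_zero (z : ADRModule A m) : z ∈ adrFil m 0 := by
  intro j
  obtain ⟨a, ha⟩ := (radPow A A (j.1 + 1)).mkQ_surjective (z j)
  exact ⟨a, trivial, ha.symm⟩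

lemma adrFil_smul {k l : ℕ} {a : A} (ha : a ∈ radPow A A k) {z : ADRModule A m}
    (hz : z ∈ adrFil m l) : a • z ∈ adrFil m (l + k) := by
  intro j
  obtain ⟨b, hb, hb'⟩ := hz j
  exact ⟨a * b, adr_rp_mul ha hb, by
    change a • z j = _
    rw [hb', adr_smul_mk]⟩

lemma adrFil_map (f : ADRModule A m →ₗ[A] ADRModule A m) {l : ℕ}
    (hf : ∀ k, f (adrIn k 1) ∈ adrFil m l) {k : ℕ} {z : ADRModule A m} (hz : z ∈ adrFil m k) :
    f z ∈ adrFil m (l + k) := by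
  choose a ha ha' using hz
  rw [adr_sum_in z a (fun j => (ha' j).symm), map_sum]
  refine Submodule.sum_mem _ fun j _ => ?_
  rw [adr_map_in]
  exact adrFil_smul (ha j) (hf j)

lemma adrFil_mk {j : Fin m} {z : ADRModule A m} (hz : z ∈ adrFil m 1) {c : A}
    (hc : z j = (radPow A A (j.1 + 1)).mkQ c) : c ∈ radPow A A 1 := by
  obtain ⟨a, ha, ha'⟩ := hz j
  rw [hc, ← sub_eq_zero, ← map_sub, adr_mk_zero] at ha'
  have := adr_rp_anti (Nat.le_add_left 1 j.1) ha'
  simpa using Submodule.add_mem _ this ha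

lemma adrFil_nil (hA : radPow A A m = ⊥) (f : Module.End A (ADRModule A m))
    (hf : ∀ z, f z ∈ adrFil m 1) : IsNilpotent f := by
  have key : ∀ k : ℕ, ∀ z, (f ^ k) z ∈ adrFil m k := by
    intro k
    induction k with
    | zero => intro z; exact adrFil_zero _
    | succ k ih =>
      intro z
      rw [pow_succ', Module.End.mul_apply]
      have := adrFil_map f (fun k => hf _) (ih z)
      rwa [add_comm] at this
  refine ⟨m, LinearMap.ext fun z => ?_⟩
  funext j
  obtain ⟨a, ha, ha'⟩ := key m z j
  rw [hA] at ha
  rw [ha', (Submodule.mem_bot A).1 ha]; rfl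

lemma adrFil_jac (hA : radPow A A m = ⊥) (f : Module.End A (ADRModule A m))
    (hf : ∀ z, f z ∈ adrFil m 1) : f ∈ Ring.jacobson (Module.End A (ADRModule A m)) := by
  apply adr_mem_jac_of_nil
  intro y
  apply adrFil_nil hA
  intro z
  have := adrFil_map (l := 0) y (fun k => adrFil_zero _) (hf z)
  simpa using this

/-- the map shifting from level `j+2` to level `j+1`. -/
def adrPhi (m : ℕ) (F : ℕ → A) : Module.End A (ADRModule A m) :=
  LinearMap.pi fun j : Fin m =>
    if h : j.1 + 1 < m then
      (adrEv (j.1 + 1 + 1) ((radPow A A (j.1 + 1)).mkQ (1 - F (j.1 + 1)))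
        (adr_kill (Nat.le_succ _) _)) ∘ₗ
        (LinearMap.proj (⟨j.1 + 1, h⟩ : Fin m) : ADRModule A m →ₗ[A] _)
    else 0

lemma adrPhi_pos (F : ℕ → A) (j : Fin m) (h : j.1 + 1 < m) (z : ADRModule A m) (c : A)
    (hc : z ⟨j.1 + 1, h⟩ = (radPow A A (j.1 + 1 + 1)).mkQ c) :
    adrPhi m F z j = (radPow A A (j.1 + 1)).mkQ (c * (1 - F (j.1 + 1))) := by
  simp only [adrPhi, LinearMap.pi_apply, dif_pos h, LinearMap.comp_apply, LinearMap.proj_apply]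
  rw [hc, adrEv_mk, adr_smul_mk]

lemma adrPhi_neg (F : ℕ → A) (j : Fin m) (h : ¬ j.1 + 1 < m) (z : ADRModule A m) :
    adrPhi m F z j = 0 := by
  simp only [adrPhi, LinearMap.pi_apply, dif_neg h, LinearMap.zero_apply]

lemma adr_proj_mk (j : Fin m) (z : ADRModule A m) :
    ∃ c : A, z j = (radPow A A (j.1 + 1)).mkQ c := by
  obtain ⟨c, hc⟩ := (radPow A A (j.1 + 1)).mkQ_surjective (z j)
  exact ⟨c, hc.symm⟩

/-- projector on the `i`-th summand. -/
def adrPr (i : Fin m) : Module.End A (ADRModule A m) :=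
  LinearMap.single A (fun j : Fin m => A ⧸ radPow A A (j.1 + 1)) i ∘ₗ
    (LinearMap.proj i : ADRModule A m →ₗ[A] _)

lemma adrPr_apply (i : Fin m) (z : ADRModule A m) (c : A)
    (hc : z i = (radPow A A (i.1 + 1)).mkQ c) : adrPr i z = adrIn i c := by
  rw [adrIn, ← hc]; rfl

lemma adrIn_fil (i : Fin m) {k : ℕ} {a : A} (ha : a ∈ radPow A A k) :
    adrIn i a ∈ adrFil m k := by
  rw [adrIn_eq]
  simpa using adrFil_smul ha (adrFil_zero (adrIn i 1))

lemma adrPhi_jac (hA : radPow A A m = ⊥) (F : ℕ → A)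
    (hF : ∀ a, 1 ≤ a → ∀ x : A, (∀ y ∈ radPow A A a, y * x ∈ radPow A A (a + 1)) →
        x * (1 - F a) ∈ radPow A A 1) :
    adrPhi m F ∈ Ring.jacobson (Module.End A (ADRModule A m)) := by
  have hsum : adrPhi m F = ∑ i : Fin m, adrPr i * adrPhi m F := by
    refine LinearMap.ext fun z => ?_
    rw [LinearMap.sum_apply]
    exact (LinearMap.sum_single_apply (fun j : Fin m => A ⧸ radPow A A (j.1 + 1))
      (adrPhi m F z)).symm
  rw [hsum]
  refine Submodule.sum_mem _ fun i _ => ?_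
  apply adr_mem_jac_of_nil
  intro g
  have hsq : IsNilpotent ((g * (adrPr i * adrPhi m F)) ^ 2) := by
    apply adrFil_nil hA
    intro z
    rw [pow_two, mul_assoc, Module.End.mul_apply]
    refine (show ∀ w ∈ adrFil m 1, g w ∈ adrFil m 1 from fun w hw => by
      simpa using adrFil_map (l := 0) g (fun k => adrFil_zero _) hw) _ ?_
    rw [Module.End.mul_apply, Module.End.mul_apply, Module.End.mul_apply, Module.End.mul_apply]
    by_cases h : i.1 + 1 < m
    · obtain ⟨c, hc⟩ := adr_proj_mk ⟨i.1 + 1, h⟩ z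
      have e1 := adrPhi_pos F i h z c hc
      rw [adrPr_apply i _ _ e1, adr_map_in]
      obtain ⟨x, hx⟩ := adr_proj_mk ⟨i.1 + 1, h⟩ (g (adrIn i 1))
      have e2 := adrPhi_pos F i h (g (adrIn i 1)) x hx
      rw [map_smul, map_smul, adrPr_apply i _ _ e2]
      refine Submodule.smul_mem _ _ (adrIn_fil i ?_)
      refine hF _ (Nat.le_add_left 1 _) x ?_
      intro y hy
      have h0 : y • g (adrIn i 1) = 0 := by
        rw [← adr_map_in, adrIn_eq_zero.2 hy, map_zero]
      have h1 : y • (g (adrIn i 1)) ⟨i.1 + 1, h⟩ = 0 := congrFun h0 ⟨i.1 + 1, h⟩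
      rw [hx, adr_smul_mk, adr_mk_zero] at h1
      exact h1
    · have e1 : ∀ w, adrPr i (adrPhi m F w) = 0 := by
        intro w
        rw [adrPr_apply i _ 0 (by rw [adrPhi_neg F i h]; simp), adrIn_eq_zero]
        exact Submodule.zero_mem _
      rw [e1]
      exact Submodule.zero_mem _
  obtain ⟨n, hn⟩ := hsq
  exact ⟨2 * n, by rw [pow_mul, hn]⟩

lemma adr_nil_key [IsSemiprimaryRing (Module.End A (ADRModule A m))] (hA : radPow A A m = ⊥)
    {x : Module.End A (ADRModule A m)}
    (hx : x ∈ Ring.jacobson (Module.End A (ADRModule A m))) (L : Fin m) (t : A)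
    (ρ lam : Module.End A (ADRModule A m))
    (h : ρ (x (lam (adrIn L 1))) = adrIn L t) : IsNilpotent t := by
  have hj : ρ * (x * lam) ∈ Ring.jacobson (Module.End A (ADRModule A m)) :=
    Ideal.mul_mem_left _ _ (Ideal.mul_mem_right _ _ hx)
  obtain ⟨n, hn⟩ := adr_nil_of_mem_jac hj
  have key : ∀ k : ℕ, ((ρ * (x * lam)) ^ k) (adrIn L 1) = adrIn L (t ^ k) := by
    intro k
    induction k with
    | zero => simp
    | succ k ih =>
      rw [pow_succ', Module.End.mul_apply, ih, adr_map_in]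
      rw [Module.End.mul_apply, Module.End.mul_apply, h, adrIn_smul, pow_succ]
  have h1 := key n
  rw [hn] at h1
  have h2 : t ^ n ∈ radPow A A (L.1 + 1) := adrIn_eq_zero.1 h1.symm
  obtain ⟨k, hk⟩ := adr_isNilpotent hA (adr_rp_anti (Nat.le_add_left 1 L.1) h2)
  exact ⟨n * k, by rw [pow_mul, hk]⟩

/-- the map `A/J^{k+1} → A/J^{j+1}` given by `c` as endomorphism of the ADR module. -/
def adrMat (j k : Fin m) (c : A) (h : ∀ y ∈ radPow A A (k.1 + 1), y * c ∈ radPow A A (j.1 + 1)) :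
    Module.End A (ADRModule A m) :=
  LinearMap.single A (fun j : Fin m => A ⧸ radPow A A (j.1 + 1)) j ∘ₗ
    adrEv (k.1 + 1) ((radPow A A (j.1 + 1)).mkQ c)
      (fun y hy => by rw [adr_smul_mk, adr_mk_zero]; exact h y hy) ∘ₗ
    (LinearMap.proj k : ADRModule A m →ₗ[A] _)

lemma adrMat_apply (j k : Fin m) (c : A)
    (h : ∀ y ∈ radPow A A (k.1 + 1), y * c ∈ radPow A A (j.1 + 1)) (z : ADRModule A m) (a : A)
    (hz : z k = (radPow A A (k.1 + 1)).mkQ a) : adrMat j k c h z = adrIn j (a * c) := by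
  simp only [adrMat, LinearMap.comp_apply, LinearMap.proj_apply]
  rw [hz, adrEv_mk, adr_smul_mk]; rfl

lemma adrMat_in (j k : Fin m) (c : A)
    (h : ∀ y ∈ radPow A A (k.1 + 1), y * c ∈ radPow A A (j.1 + 1)) (a : A) :
    adrMat j k c h (adrIn k a) = adrIn j (a * c) :=
  adrMat_apply j k c h _ a (adrIn_same k a)

lemma adrMat_in_ne (j k : Fin m) (c : A)
    (h : ∀ y ∈ radPow A A (k.1 + 1), y * c ∈ radPow A A (j.1 + 1)) {i : Fin m} (hi : k ≠ i)
    (a : A) : adrMat j k c h (adrIn i a) = 0 := by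
  rw [adrMat_apply j k c h _ 0 (by rw [adrIn_ne hi]; simp), zero_mul, adrIn_eq_zero]
  exact Submodule.zero_mem _

lemma adr_jac_decomp [IsSemiprimaryRing (Module.End A (ADRModule A m))]
    (hA : radPow A A m = ⊥) (F : ℕ → A)
    (hF1 : ∀ a, 1 ≤ a → ∀ x ∈ radPow A A a, x * F a = 0)
    (hF : ∀ a, 1 ≤ a → ∀ x : A, (∀ y ∈ radPow A A a, y * x ∈ radPow A A (a + 1)) →
        x * (1 - F a) ∈ radPow A A 1)
    {x : Module.End A (ADRModule A m)}
    (hx : x ∈ Ring.jacobson (Module.End A (ADRModule A m))) :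
    ∃ g : Module.End A (ADRModule A m), ∀ z, (x - adrPhi m F * g) z ∈ adrFil m 1 := by
  have hJ : ∀ t : A, (∀ y, IsNilpotent (y * t)) → t ∈ radPow A A 1 := by
    intro t ht
    rw [adr_rp_one, adr_jac_eq]; exact adr_mem_jac_of_nil ht
  choose X hX using fun j k : Fin m => adr_proj_mk j (x (adrIn k 1))
  have hXk : ∀ j k : Fin m, ∀ y ∈ radPow A A (k.1 + 1), y * X j k ∈ radPow A A (j.1 + 1) := by
    intro j k y hy
    have h0 : y • x (adrIn k 1) = 0 := by rw [← adr_map_in, adrIn_eq_zero.2 hy, map_zero]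
    have h1 : y • (x (adrIn k 1)) j = 0 := congrFun h0 j
    rwa [hX, adr_smul_mk, adr_mk_zero] at h1
  have hXin : ∀ (j k : Fin m) (y : A), x (adrIn k y) j = (radPow A A (j.1 + 1)).mkQ (y * X j k) := by
    intro j k y
    rw [adr_map_in, ← adr_smul_mk, ← hX]; rfl
  have f1 : ∀ j k : Fin m, X j k * F (j.1 + 1) ∈ radPow A A 1 := by
    intro j k
    apply hJ
    intro y
    have hm0 : 0 < m := lt_of_le_of_lt (Nat.zero_le _) j.2
    let L : Fin m := ⟨m - 1, by omega⟩
    have hL : radPow A A (L.1 + 1) = ⊥ := by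
      have : L.1 + 1 = m := by simp only [L]; omega
      rw [this, hA]
    refine adr_nil_key hA hx L _
      (adrMat L j (F (j.1 + 1)) (fun a ha => by
        rw [hF1 _ (Nat.le_add_left 1 _) a ha]; exact Submodule.zero_mem _))
      (adrMat k L y (fun a ha => by
        rw [hL] at ha; rw [(Submodule.mem_bot A).1 ha, zero_mul]; exact Submodule.zero_mem _)) ?_
    rw [adrMat_in, adrMat_apply _ _ _ _ _ _ (hXin j k _), one_mul, mul_assoc]
  have f2 : ∀ j : Fin m, X j j ∈ radPow A A 1 := by
    intro j
    apply hJ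
    intro y
    refine adr_nil_key hA hx j _ (adrPr j)
      (adrMat j j y (fun a ha => adr_rp_mul_right ha y)) ?_
    rw [adrMat_in, adrPr_apply _ _ _ (hXin j j _), one_mul]
  have f3 : ∀ j k : Fin m, k < j → X j k * (1 - F (j.1 + 1)) ∈ radPow A A 1 := by
    intro j k hkj
    refine hF _ (Nat.le_add_left 1 _) _ ?_
    have hkj' : k.1 < j.1 := hkj
    intro y hy
    -- `y ∈ J^(j+1)`, the product lies in `J^(j+2)`
    have : ∀ d : ℕ, ∀ y ∈ radPow A A (k.1 + 1 + d), y * X j k ∈ radPow A A (j.1 + 1 + d) := by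
      intro d
      induction d with
      | zero => exact hXk j k
      | succ d ih =>
        intro y hy
        change y ∈ Submodule.span A _ at hy
        refine Submodule.span_induction ?_ ?_ ?_ ?_ hy
        · rintro _ ⟨r, hr, z, hz, rfl⟩
          refine Submodule.subset_span ⟨r, hr, z * X j k, ih z hz, ?_⟩
          simp [mul_assoc]
        · simp
        · intro x z _ _ hx hz; rw [add_mul]; exact Submodule.add_mem _ hx hz
        · intro c x _ hx
          rw [smul_mul_assoc]; exact Submodule.smul_mem _ c hx
    exact this 1 y (adr_rp_anti (by omega) hy)
  -- the correction map
  let g : Module.End A (ADRModule A m) := ∑ p : Fin m × Fin m,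
    if h : p.1.1 < p.2.1 then
      adrMat ⟨p.1.1 + 1, lt_of_le_of_lt h p.2.2⟩ p.2 (X p.1 p.2)
        (fun y hy => adr_rp_anti (Nat.succ_le_succ h) (adr_rp_mul_right hy _))
    else 0
  have hg : ∀ (k j : Fin m) (hj : j.1 + 1 < m), g (adrIn k 1) ⟨j.1 + 1, hj⟩ =
      (radPow A A (j.1 + 1 + 1)).mkQ (if j.1 < k.1 then X j k else 0) := by
    intro k j hj
    simp only [g, LinearMap.sum_apply, Finset.sum_apply]
    rw [Finset.sum_eq_single (j, k)]
    · by_cases h : j.1 < k.1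
      · rw [dif_pos h, if_pos h, adrMat_in, one_mul]
        exact adrIn_same (⟨j.1 + 1, hj⟩ : Fin m) _
      · rw [dif_neg h, if_neg h, map_zero]; rfl
    · rintro ⟨j', k'⟩ _ hne
      by_cases h : j'.1 < k'.1
      · rw [dif_pos h]
        by_cases hk : k' = k
        · subst hk
          rw [adrMat_in]
          refine adrIn_ne ?_ _
          intro he
          apply hne
          have := congrArg Fin.val he
          simp only [Nat.add_right_cancel_iff] at this
          rw [Fin.ext this]
        · rw [adrMat_in_ne _ _ _ _ hk]; rfl
      · rw [dif_neg h]; rfl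
    · intro h; exact absurd (Finset.mem_univ _) h
  refine ⟨g, fun z => ?_⟩
  have := adrFil_map (l := 1) (k := 0) (x - adrPhi m F * g) (z := z) ?_ (adrFil_zero z)
  · simpa using this
  intro k j
  have hval : (x - adrPhi m F * g) (adrIn k 1) j =
      (radPow A A (j.1 + 1)).mkQ (X j k - (if j.1 < k.1 then X j k else 0) *
        (1 - F (j.1 + 1))) := by
    have e0 : (x - adrPhi m F * g) (adrIn k 1) j =
        x (adrIn k 1) j - adrPhi m F (g (adrIn k 1)) j := rfl
    rw [e0, map_sub, hX]
    congr 1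
    by_cases hj : j.1 + 1 < m
    · exact adrPhi_pos F j hj _ _ (hg k j hj)
    · rw [adrPhi_neg F j hj, if_neg (by omega), zero_mul, map_zero]
  refine ⟨_, ?_, hval⟩
  rcases lt_trichotomy j.1 k.1 with h | h | h
  · rw [if_pos h]
    have := f1 j k
    rwa [mul_sub, mul_one, sub_sub_cancel]
  · have : j = k := Fin.ext h
    subst this
    simpa using f2 j
  · rw [if_neg (by omega), zero_mul, sub_zero]
    have := Submodule.add_mem _ (f1 j k) (f3 j k h)
    rwa [mul_sub, mul_one, add_sub_cancel] at this

end MPart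
section FinalPart

lemma adr_desc {A P V Y : Type} [Ring A] [AddCommGroup P] [Module A P] [AddCommGroup V]
    [Module A V] [AddCommGroup Y] [Module A Y] (p : P →ₗ[A] V) (hp : Function.Surjective p)
    (f : P →ₗ[A] Y) (h : ∀ x, p x = 0 → f x = 0) : ∃ f' : V →ₗ[A] Y, ∀ x, f' (p x) = f x := by
  refine ⟨(LinearMap.ker p).liftQ f (fun x hx => h x hx) ∘ₗ
    (p.quotKerEquivOfSurjective hp).symm.toLinearMap, fun x => ?_⟩
  have : (p.quotKerEquivOfSurjective hp).symm (p x) = (LinearMap.ker p).mkQ x := by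
    rw [LinearEquiv.symm_apply_eq]; rfl
  simp only [LinearMap.comp_apply, LinearEquiv.coe_coe, this]
  rfl

variable {A : Type} [Ring A] {m : ℕ}

lemma adr_inAdd_iff {M X : Type} [AddCommGroup M] [Module A M] [AddCommGroup X] [Module A X] :
    InAdd A M X ↔ AdrRet A M X := by
  constructor
  · rintro ⟨n, Y, _, _, ⟨e⟩⟩
    exact ⟨Fin n, inferInstance, e.toLinearMap ∘ₗ LinearMap.inl A X Y,
      LinearMap.fst A X Y ∘ₗ e.symm.toLinearMap, fun x => by simp⟩
  · rintro ⟨κ, hκ, s, t, h⟩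
    refine ⟨Fintype.card κ, LinearMap.ker t, inferInstance, inferInstance, ⟨?_⟩⟩
    have hm : ∀ w, w - s (t w) ∈ LinearMap.ker t := fun w => by simp [h]
    have e1 : (X × LinearMap.ker t) ≃ₗ[A] (κ → M) := by
      refine LinearEquiv.ofLinearMap (s.coprod (LinearMap.ker t).subtype)
        (t.prod (LinearMap.codRestrict _ (LinearMap.id - s ∘ₗ t) hm)) ?_ ?_
      · refine LinearMap.ext fun w => ?_
        exact add_sub_cancel (s (t w)) w
      · refine LinearMap.ext fun w => ?_
        obtain ⟨x, k⟩ := w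
        have hk : t k = 0 := k.2
        have e1 : t (s x + k) = x := by rw [map_add, h, hk, add_zero]
        refine Prod.ext e1 (Subtype.ext ?_)
        change s x + (k : κ → M) - s (t (s x + k)) = k
        rw [e1, add_sub_cancel_left]
    exact e1.trans (LinearEquiv.funCongrLeft A M (Fintype.equivFin κ).symm)

lemma adr_ret_comp {l : ℕ} (hl : l ≤ m) : AdrRet A (ADRModule A m) (A ⧸ radPow A A l) := by
  cases l with
  | zero =>
    have : Subsingleton (A ⧸ radPow A A 0) := by
      constructor
      intro x y
      obtain ⟨a, rfl⟩ := (radPow A A 0).mkQ_surjective x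
      obtain ⟨b, rfl⟩ := (radPow A A 0).mkQ_surjective y
      rw [← sub_eq_zero, ← map_sub, adr_mk_zero]
      trivial
    exact AdrRet.zero
  | succ l =>
    refine AdrRet.self.of_retract
      (LinearMap.single A (fun j : Fin m => A ⧸ radPow A A (j.1 + 1)) ⟨l, hl⟩)
      (LinearMap.proj (⟨l, hl⟩ : Fin m)) fun y => by simp

lemma adr_rp_succ_span (j : ℕ) : radPow A A (j + 1) ≤
    Submodule.span A {x | ∃ a ∈ radPow A A j, ∃ y ∈ jacobsonRad A, x = a * y} := by
  induction j with
  | zero =>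
    intro x hx
    rw [zero_add, adr_rp_one] at hx
    exact Submodule.subset_span ⟨1, trivial, x, hx, by simp⟩
  | succ j ih =>
    refine Submodule.span_le.2 ?_
    rintro _ ⟨c, hc, z, hz, rfl⟩
    rw [← adr_rp_one] at hc
    have key : ∀ c ∈ radPow A A 1, c • z ∈
        Submodule.span A {x | ∃ a ∈ radPow A A (j + 1), ∃ y ∈ jacobsonRad A, x = a * y} := by
      clear hc c
      refine Submodule.span_induction
        (p := fun z _ => ∀ c ∈ radPow A A 1, c • z ∈
          Submodule.span A {x | ∃ a ∈ radPow A A (j + 1), ∃ y ∈ jacobsonRad A, x = a * y})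
        ?_ ?_ ?_ ?_ (ih hz)
      · rintro _ ⟨a, ha, y, hy, rfl⟩ c hc
        exact Submodule.subset_span ⟨c * a, adr_rp_mul hc ha, y, hy, by simp [mul_assoc]⟩
      · intro c _
        rw [smul_zero]; exact Submodule.zero_mem _
      · intro x y _ _ hx hy c hc
        rw [smul_add]; exact Submodule.add_mem _ (hx c hc) (hy c hc)
      · intro r x _ hx c hc
        rw [smul_smul]
        exact hx _ (adr_rp_mul_right hc r)
    exact key c hc

/-- Quotients `J / J^{j+1}` are in `add M` as soon as `J` is. -/
lemma adr_ret_quot (hJ : AdrRet A (ADRModule A m) ↥(jacobsonRad A)) (j : ℕ) (hj : j ≤ m) :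
    AdrRet A (ADRModule A m) ↥(Submodule.map (radPow A A (j + 1)).mkQ (jacobsonRad A)) := by
  classical
  obtain ⟨κ, _, s, t, hst⟩ := hJ
  let p : ↥(jacobsonRad A) →ₗ[A] ↥(Submodule.map (radPow A A (j + 1)).mkQ (jacobsonRad A)) :=
    LinearMap.codRestrict _ ((radPow A A (j + 1)).mkQ ∘ₗ (jacobsonRad A).subtype)
      (fun x => ⟨x.1, x.2, rfl⟩)
  have hpv : ∀ x, (p x : A ⧸ radPow A A (j + 1)) = (radPow A A (j + 1)).mkQ x.1 := fun _ => rfl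
  have hp : Function.Surjective p := by
    rintro ⟨_, x, hx, rfl⟩
    exact ⟨⟨x, hx⟩, rfl⟩
  have hZ : AdrRet A (ADRModule A m) (∀ q : κ × Fin m, A ⧸ radPow A A (min (q.2.1 + 1) j)) :=
    AdrRet.pi fun q => adr_ret_comp ((min_le_right _ _).trans hj)
  let h : ↥(jacobsonRad A) →ₗ[A] (∀ q : κ × Fin m, A ⧸ radPow A A (min (q.2.1 + 1) j)) :=
    LinearMap.pi fun q =>
      adrEv (q.2.1 + 1) ((radPow A A (min (q.2.1 + 1) j)).mkQ 1) (adr_kill (min_le_left _ _) _) ∘ₗ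
        (LinearMap.proj q.2 : ADRModule A m →ₗ[A] _) ∘ₗ
          (LinearMap.proj q.1 : (κ → ADRModule A m) →ₗ[A] _) ∘ₗ s
  have hkill : ∀ a ∈ radPow A A j, ∀ y, a • h y = 0 := by
    intro a ha y
    funext q
    exact adr_kill (min_le_right _ _) _ a ha
  have hker : ∀ x, p x = 0 → h x = 0 := by
    intro x hx
    have hx' : x.1 ∈ radPow A A (j + 1) := by
      rw [← adr_mk_zero, ← hpv, hx]; rfl
    have : ∃ hx : x.1 ∈ jacobsonRad A, h ⟨x.1, hx⟩ = 0 := by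
      refine Submodule.span_induction
        (p := fun z _ => ∃ hx : z ∈ jacobsonRad A, h ⟨z, hx⟩ = 0)
        ?_ ?_ ?_ ?_ (adr_rp_succ_span j hx')
      · rintro _ ⟨a, ha, y, hy, rfl⟩
        exact ⟨Ideal.mul_mem_left _ a hy, by
          rw [← hkill a ha ⟨y, hy⟩, ← map_smul]; rfl⟩
      · exact ⟨Submodule.zero_mem _, map_zero h⟩
      · rintro x y _ _ ⟨hx, hx'⟩ ⟨hy, hy'⟩
        refine ⟨Submodule.add_mem _ hx hy, ?_⟩
        have := map_add h ⟨x, hx⟩ ⟨y, hy⟩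
        rw [hx', hy', add_zero] at this
        exact this
      · rintro r x _ ⟨hx, hx'⟩
        refine ⟨Submodule.smul_mem _ r hx, ?_⟩
        have := map_smul h r ⟨x, hx⟩
        rw [hx', smul_zero] at this
        exact this
    exact this.2
  obtain ⟨σ, hσ⟩ := adr_desc p hp h hker
  let g : κ × Fin m → ↥(jacobsonRad A) := fun q =>
    t (LinearMap.single A (fun _ => ADRModule A m) q.1 (adrIn q.2 1))
  have hg1 : ∀ q : κ × Fin m, ∀ a ∈ radPow A A (q.2.1 + 1), a • g q = 0 := by
    intro q a ha
    rw [← map_smul, ← map_smul, ← adrIn_eq, adrIn_eq_zero.2 ha, map_zero, map_zero]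
  have hg : ∀ q : κ × Fin m, ∀ a ∈ radPow A A (min (q.2.1 + 1) j), a • p (g q) = 0 := by
    intro q a ha
    rcases min_cases (q.2.1 + 1) j with ⟨h1, _⟩ | ⟨h1, _⟩
    · rw [h1] at ha
      rw [← map_smul, hg1 q a ha, map_zero]
    · rw [h1] at ha
      refine Subtype.ext ?_
      change (radPow A A (j + 1)).mkQ (a * (g q).1) = 0
      rw [adr_mk_zero]
      have h2 : (g q).1 ∈ radPow A A 1 := adr_rp_one.ge (g q).2
      have := adr_rp_mul ha h2
      rwa [add_comm] at this
  let τ : (∀ q : κ × Fin m, A ⧸ radPow A A (min (q.2.1 + 1) j)) →ₗ[A]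
      ↥(Submodule.map (radPow A A (j + 1)).mkQ (jacobsonRad A)) :=
    ∑ q : κ × Fin m, adrEv (min (q.2.1 + 1) j) (p (g q)) (hg q) ∘ₗ LinearMap.proj q
  refine hZ.of_retract σ τ fun y => ?_
  obtain ⟨x, rfl⟩ := hp y
  rw [hσ]
  have hc : ∀ q : κ × Fin m, ∃ c : A, s x q.1 q.2 = (radPow A A (q.2.1 + 1)).mkQ c :=
    fun q => adr_proj_mk q.2 (s x q.1)
  choose c hc using hc
  have e1 : τ (h x) = ∑ q : κ × Fin m, c q • p (g q) := by
    simp only [τ, LinearMap.sum_apply, LinearMap.comp_apply, LinearMap.proj_apply]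
    refine Finset.sum_congr rfl fun q _ => ?_
    have : h x q = (radPow A A (min (q.2.1 + 1) j)).mkQ (c q) := by
      change adrEv (q.2.1 + 1) _ (adr_kill (min_le_left _ _) _) (s x q.1 q.2) = _
      rw [hc q, adrEv_mk, ← adr_mk_eq]
    rw [this, adrEv_mk]
  rw [e1]
  have e2 : ∑ q : κ × Fin m, c q • p (g q) = p (∑ q : κ × Fin m, c q • g q) := by
    rw [map_sum]; exact Finset.sum_congr rfl fun q _ => (map_smul _ _ _).symm
  rw [e2]
  congr 1
  conv_rhs => rw [← hst x, ← adr_sum_single t (s x)]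
  rw [Fintype.sum_prod_type]
  refine Finset.sum_congr rfl fun i _ => ?_
  conv_rhs => rw [adr_sum_in (s x i) (fun k => c (i, k)) (fun k => (hc (i, k)).symm)]
  rw [map_sum, map_sum]
  refine Finset.sum_congr rfl fun k _ => ?_
  rw [adrIn_eq, map_smul, map_smul]

lemma adr_ret_fil (hJ : AdrRet A (ADRModule A m) ↥(jacobsonRad A)) :
    AdrRet A (ADRModule A m) ↥(adrFil (A := A) m 1) := by
  have h := AdrRet.pi (fun j : Fin m => adr_ret_quot hJ j.1 j.2.le)
  refine h.of_retract
    (LinearMap.pi fun j : Fin m => LinearMap.codRestrict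
      (Submodule.map (radPow A A (j.1 + 1)).mkQ (jacobsonRad A))
      ((LinearMap.proj j : ADRModule A m →ₗ[A] _) ∘ₗ (adrFil (A := A) m 1).subtype) ?_)
    (LinearMap.codRestrict (adrFil (A := A) m 1)
      (LinearMap.pi fun j : Fin m => Submodule.subtype _ ∘ₗ LinearMap.proj j) ?_) ?_
  · intro z
    obtain ⟨a, ha, ha'⟩ := z.2 j
    rw [adr_rp_one] at ha
    exact ⟨a, ha, ha'.symm⟩
  · intro z j
    obtain ⟨a, ha, ha'⟩ := (z j).2
    have ha : a ∈ jacobsonRad A := ha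
    rw [← adr_rp_one] at ha
    exact ⟨a, ha, ha'.symm⟩
  · intro z
    rfl

end FinalPart
section SuffPart

variable {A : Type} [Ring A] {m : ℕ}

/-- Multiplication by `F j` on the `j`-th component. -/
def adrTheta (m : ℕ) (F : ℕ → A) : Module.End A (ADRModule A m) :=
  LinearMap.pi fun j : Fin m =>
    adrEv (j.1 + 1) ((radPow A A (j.1 + 1)).mkQ (F j.1)) (adr_kill le_rfl _) ∘ₗ
      (LinearMap.proj j : ADRModule A m →ₗ[A] _)

lemma adrTheta_apply (F : ℕ → A) (j : Fin m) (z : ADRModule A m) (c : A)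
    (hc : z j = (radPow A A (j.1 + 1)).mkQ c) :
    adrTheta m F z j = (radPow A A (j.1 + 1)).mkQ (c * F j.1) := by
  simp only [adrTheta, LinearMap.pi_apply, LinearMap.comp_apply, LinearMap.proj_apply]
  rw [hc, adrEv_mk, adr_smul_mk]

lemma adrPhi_fil (F : ℕ → A) {z : ADRModule A m}
    (hz : ∀ (j : Fin m) (c : A), z j = (radPow A A (j.1 + 1)).mkQ c → 1 ≤ j.1 →
      c * (1 - F j.1) ∈ radPow A A 1) : adrPhi m F z ∈ adrFil m 1 := by
  intro j
  by_cases h : j.1 + 1 < m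
  · obtain ⟨c, hc⟩ := adr_proj_mk ⟨j.1 + 1, h⟩ z
    exact ⟨_, hz ⟨j.1 + 1, h⟩ c hc (Nat.le_add_left _ _), adrPhi_pos F j h z c hc⟩
  · exact ⟨0, Submodule.zero_mem _, by rw [adrPhi_neg F j h, map_zero]⟩

theorem adr_suff [IsSemiprimaryRing A] [IsSemiprimaryRing (Module.End A (ADRModule A m))]
    (hA : radPow A A m = ⊥)
    (hJ : AdrRet A (ADRModule A m) ↥(jacobsonRad A)) :
    GlDimLE2 (Module.End A (ADRModule A m)) := by
  have hex := fun a => adr_exists_F hA a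
  choose F' hF1' hF' using hex
  let F : ℕ → A := fun a => if a = 0 then 1 else F' a
  have hF0 : F 0 = 1 := if_pos rfl
  have hFp : ∀ a, 1 ≤ a → F a = F' a := fun a ha => if_neg (by omega)
  have hF1 : ∀ a, 1 ≤ a → ∀ x ∈ radPow A A a, x * F a = 0 := by
    intro a ha; rw [hFp a ha]; exact hF1' a
  have hF : ∀ a, 1 ≤ a → ∀ x : A, (∀ y ∈ radPow A A a, y * x ∈ radPow A A (a + 1)) →
        x * (1 - F a) ∈ radPow A A 1 := by
    intro a ha; rw [hFp a ha]; exact hF' a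
  have hfil := adr_ret_fil hJ
  have hMf : AdrRet A (ADRModule A m) (ADRModule A m × ↥(adrFil (A := A) m 1)) :=
    AdrRet.self.prod hfil
  have hFM : AdrRet A (ADRModule A m) (↥(adrFil (A := A) m 1) × ADRModule A m) :=
    hfil.prod AdrRet.self
  have h1 : ∀ u : ADRModule A m, adrPhi m F (adrTheta m F u) ∈ adrFil m 1 := by
    intro u
    apply adrPhi_fil
    intro j c hc hj
    obtain ⟨d, hd⟩ := adr_proj_mk j u
    rw [adrTheta_apply F j u d hd, ← sub_eq_zero, ← map_sub, adr_mk_zero] at hc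
    have e1 : d * F j.1 * (1 - F j.1) ∈ radPow A A 1 := by
      apply hF j.1 hj
      intro y hy
      rw [← mul_assoc, hF1 j.1 hj _ (adr_rp_mul_right hy d)]
      exact Submodule.zero_mem _
    have e2 : (d * F j.1 - c) * (1 - F j.1) ∈ radPow A A 1 :=
      adr_rp_mul_right (adr_rp_anti (Nat.le_add_left 1 j.1) hc) _
    have := Submodule.sub_mem _ e1 e2
    rwa [← sub_mul, sub_sub_cancel] at this
  have h2 : ∀ v : ADRModule A m, v ∈ adrFil m 1 → adrPhi m F v ∈ adrFil m 1 := by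
    intro v hv
    apply adrPhi_fil
    intro j c hc _
    exact adr_rp_mul_right (adrFil_mk hv hc) _
  have h3 : ∀ z : ADRModule A m, adrPhi m F z ∈ adrFil m 1 → z - adrTheta m F z ∈ adrFil m 1 := by
    intro z hz j
    obtain ⟨c, hc⟩ := adr_proj_mk j z
    refine ⟨c * (1 - F j.1), ?_, ?_⟩
    · obtain ⟨j, hj⟩ := j
      cases j with
      | zero => rw [hF0, sub_self, mul_zero]; exact Submodule.zero_mem _
      | succ j =>
        exact adrFil_mk hz (adrPhi_pos F ⟨j, by omega⟩ hj z c hc)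
    · rw [Pi.sub_apply, adrTheta_apply F j z c hc, hc, ← map_sub, mul_sub, mul_one]
  let b : (↥(adrFil (A := A) m 1) × ADRModule A m) →ₗ[A] ADRModule A m :=
    (adrFil (A := A) m 1).subtype.coprod (adrPhi m F)
  have hb : ∀ y z, b (y, z) = y.1 + adrPhi m F z := fun y z => rfl
  have hker : ∀ w : LinearMap.ker b, adrPhi m F w.1.2 ∈ adrFil m 1 := by
    rintro ⟨⟨y, z⟩, hw⟩
    have : y.1 + adrPhi m F z = 0 := hw
    rw [add_comm, add_eq_zero_iff_eq_neg] at this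
    change adrPhi m F z ∈ _
    rw [this]
    exact Submodule.neg_mem _ y.2
  let Y0 : (ADRModule A m × ↥(adrFil (A := A) m 1)) →ₗ[A] ADRModule A m :=
    (adrTheta m F).coprod (adrFil (A := A) m 1).subtype
  have hY0 : ∀ u v, Y0 (u, v) = adrTheta m F u + v.1 := fun _ _ => rfl
  have h4 : ∀ w, adrPhi m F (Y0 w) ∈ adrFil m 1 := by
    rintro ⟨u, v⟩
    rw [hY0, map_add]
    exact Submodule.add_mem _ (h1 u) (h2 v.1 v.2)
  have hK : AdrRet A (ADRModule A m) (LinearMap.ker b) := by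
    let S : LinearMap.ker b →ₗ[A] (ADRModule A m × ↥(adrFil (A := A) m 1)) :=
      (LinearMap.snd A _ _ ∘ₗ (LinearMap.ker b).subtype).prod
        (LinearMap.codRestrict _ ((LinearMap.id - adrTheta m F) ∘ₗ
          (LinearMap.snd A _ _ ∘ₗ (LinearMap.ker b).subtype)) (fun w => h3 _ (hker w)))
    let T : (ADRModule A m × ↥(adrFil (A := A) m 1)) →ₗ[A] LinearMap.ker b :=
      LinearMap.codRestrict _
        ((-(LinearMap.codRestrict (adrFil (A := A) m 1) (adrPhi m F ∘ₗ Y0) h4)).prod Y0)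
        (fun w => neg_add_cancel (adrPhi m F (Y0 w)))
    refine hMf.of_retract S T ?_
    rintro ⟨⟨y, z⟩, hw⟩
    have hw' : y.1 + adrPhi m F z = 0 := hw
    have e : Y0 (S ⟨⟨y, z⟩, hw⟩) = z := add_sub_cancel (adrTheta m F z) z
    refine Subtype.ext (Prod.ext (Subtype.ext ?_) e)
    change -(adrPhi m F (Y0 (S ⟨⟨y, z⟩, hw⟩))) = y.1
    rw [e]
    exact (eq_neg_of_add_eq_zero_left hw').symm
  refine adr_glDimLE2_of_ret hFM b hK fun x => ?_
  constructor
  · intro hx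
    obtain ⟨g, hg⟩ := adr_jac_decomp hA F hF1 hF hx
    refine ⟨(LinearMap.codRestrict (adrFil (A := A) m 1) (x - adrPhi m F * g) hg).prod g, ?_⟩
    refine LinearMap.ext fun z => ?_
    exact (sub_add_cancel (x z) (adrPhi m F (g z))).symm
  · rintro ⟨g, rfl⟩
    have e : b ∘ₗ g = ((adrFil (A := A) m 1).subtype ∘ₗ LinearMap.fst A _ _ ∘ₗ g
        : Module.End A (ADRModule A m)) +
        adrPhi m F * (LinearMap.snd A _ _ ∘ₗ g : Module.End A (ADRModule A m)) := rfl
    rw [e]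
    refine Ideal.add_mem _ (adrFil_jac hA _ fun z => (g z).1.2) ?_
    exact Ideal.mul_mem_right _ _ (adrPhi_jac hA F hF)

end SuffPart
section NecPart

variable {A M : Type} [Ring A] [AddCommGroup M] [Module A M]

lemma adr_end_proj (lam : M →ₗ[A] A) (u : M) (hu : lam u = 1) :
    Module.Projective (Module.End A M) M := by
  let i : M →ₗ[Module.End A M] Module.End A M :=
    { toFun := fun x => lam.smulRight x
      map_add' := fun x y => by ext z; simp
      map_smul' := fun f x => by ext z; simp }
  let p : Module.End A M →ₗ[Module.End A M] M :=
    { toFun := fun f => f u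
      map_add' := fun x y => rfl
      map_smul' := fun f x => rfl }
  refine Module.Projective.of_split i p ?_
  ext x
  change lam u • x = x
  rw [hu, one_smul]

/-- The `End M`-linear map given by a matrix with entries in `A`. -/
def adrMatMap {a b : ℕ} (q : Fin a → Fin b → A) :
    (Fin b → M) →ₗ[Module.End A M] (Fin a → M) where
  toFun w := fun l => ∑ i, q l i • w i
  map_add' w w' := by ext l; simp [smul_add, Finset.sum_add_distrib]
  map_smul' f w := by
    ext l
    simp only [Pi.smul_apply, Module.End.smul_def, RingHom.id_apply, map_sum, map_smul]

lemma adrMatMap_apply {a b : ℕ} (q : Fin a → Fin b → A) (w : Fin b → M) (l : Fin a) :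
    adrMatMap q w l = ∑ i, q l i • w i := rfl

lemma adr_pow_proj (hM : Module.Projective (Module.End A M) M) (n : ℕ) :
    Module.Projective (Module.End A M) (Fin n → M) :=
  Module.Projective.of_equiv (DFinsupp.linearEquivFunOnFintype
    (R := Module.End A M) (M := fun _ : Fin n => M))

lemma adr_le1 (h : GlDimLE1 (Module.End A M)) (hM : Module.Projective (Module.End A M) M)
    {k : ℕ} (v : Fin k → A) : ∃ e : M →ₗ[Module.End A M] M,
      (∀ i x, v i • e x = 0) ∧ ∀ x, (∀ i, v i • x = 0) → e x = x := by
  let f : M →ₗ[Module.End A M] (Fin k → M) :=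
    { toFun := fun x => fun i => v i • x
      map_add' := fun x y => by ext i; simp
      map_smul' := fun f x => by
        ext i
        simp only [Pi.smul_apply, Module.End.smul_def, RingHom.id_apply, map_smul] }
  have hr := h (Fin k → M) (adr_pow_proj hM k) (LinearMap.range f)
  obtain ⟨s, hs⟩ := Module.projective_lifting_property f.rangeRestrict LinearMap.id
    f.surjective_rangeRestrict
  have hs' : ∀ y, f.rangeRestrict (s y) = y := fun y => LinearMap.congr_fun hs y
  refine ⟨LinearMap.id - s ∘ₗ f.rangeRestrict, fun i x => ?_, fun x hx => ?_⟩
  · have : f (x - s (f.rangeRestrict x)) = 0 := by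
      rw [map_sub, sub_eq_zero]
      exact (congrArg Subtype.val (hs' (f.rangeRestrict x))).symm
    exact congrFun this i
  · have : f.rangeRestrict x = 0 := Subtype.ext (funext hx)
    change x - s (f.rangeRestrict x) = x
    rw [this, map_zero, sub_zero]

lemma adr_le2 (h : GlDimLE2 (Module.End A M)) (hM : Module.Projective (Module.End A M) M)
    {a b : ℕ} (q : Fin a → Fin b → A) (w : Fin b → M) (hw : ∀ l, ∑ i, q l i • w i = 0) :
    ∃ (n : ℕ) (v : Fin n → Fin b → M) (β : Fin n → Module.End A M),
      (∀ k l, ∑ i, q l i • v k i = 0) ∧ (∀ i, w i = ∑ k, β k (v k i)) ∧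
      ∀ g : Module.End A M, (∀ i, g (w i) = 0) → ∀ k, g * β k = 0 := by
  have hV := h _ _ (adr_pow_proj hM b) (adr_pow_proj hM a) (adrMatMap q)
  obtain ⟨s, hs⟩ := hV.out
  let w' : LinearMap.ker (adrMatMap (M := M) q) := ⟨w, funext hw⟩
  let T := (s w').support
  have hw' : w' = ∑ v ∈ T, (s w' v) • v := (hs w').symm
  let e := T.equivFin
  refine ⟨T.card, fun k => (e.symm k).1.1, fun k => s w' (e.symm k).1, ?_, ?_, ?_⟩
  · intro k l
    exact congrFun (e.symm k).1.2 l
  · intro i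
    have h1 : w = ∑ v ∈ T, (s w' v) • v.1 := by
      have := congrArg Subtype.val hw'
      rw [Submodule.coe_sum] at this
      exact this
    have h2 := congrFun h1 i
    rw [Finset.sum_apply] at h2
    rw [h2, ← Finset.sum_coe_sort T, ← Equiv.sum_comp e.symm]
    rfl
  · intro g hg k
    have h1 : g • w' = 0 := Subtype.ext (funext hg)
    have h2 : g • s w' = 0 := by rw [← map_smul, h1, map_zero]
    exact DFunLike.congr_fun h2 (e.symm k).1

variable {m : ℕ}

/-- The projection to the last component, which is `A` itself. -/
def adrLast (hA : radPow A A m = ⊥) (L : Fin m) (hL : L.1 + 1 = m) : ADRModule A m →ₗ[A] A :=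
  adrEv (L.1 + 1) (1 : A) (fun a ha => by
    rw [hL, hA] at ha; rw [(Submodule.mem_bot A).1 ha, zero_smul]) ∘ₗ
    (LinearMap.proj L : ADRModule A m →ₗ[A] _)

lemma adrLast_apply (hA : radPow A A m = ⊥) (L : Fin m) (hL : L.1 + 1 = m) (z : ADRModule A m)
    (c : A) (hc : z L = (radPow A A (L.1 + 1)).mkQ c) : adrLast hA L hL z = c := by
  simp only [adrLast, LinearMap.comp_apply, LinearMap.proj_apply]
  rw [hc, adrEv_mk, smul_eq_mul, mul_one]

lemma adrLast_in (hA : radPow A A m = ⊥) (L : Fin m) (hL : L.1 + 1 = m) (c : A) :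
    adrLast hA L hL (adrIn L c) = c := adrLast_apply hA L hL _ c (adrIn_same L c)

lemma adr_not_le1 [IsNoetherianRing A] (hm : 2 ≤ m) (hA : radPow A A m = ⊥)
    (hA' : radPow A A (m - 1) ≠ ⊥) : ¬ GlDimLE1 (Module.End A (ADRModule A m)) := by
  intro h
  let L : Fin m := ⟨m - 1, by omega⟩
  have hL : L.1 + 1 = m := Nat.sub_add_cancel (by omega)
  let L' : Fin m := ⟨m - 2, by omega⟩
  have hL' : L'.1 + 1 = m - 1 := by change m - 2 + 1 = m - 1; omega
  have hM := adr_end_proj (adrLast hA L hL) (adrIn L 1) (adrLast_in hA L hL 1)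
  obtain ⟨k, v, hv⟩ := Submodule.fg_iff_exists_fin_generating_family.1
    (IsNoetherian.noetherian (radPow A A (m - 1)))
  obtain ⟨e, he1, he2⟩ := adr_le1 h hM v
  have hvm : ∀ i, v i ∈ radPow A A (m - 1) := fun i => by
    rw [← hv]; exact Submodule.subset_span ⟨i, rfl⟩
  obtain ⟨c, hc⟩ := adr_proj_mk L (e (adrIn L 1))
  let b0 : Module.End A (ADRModule A m) := adrMat L' L 1 (fun y hy => by
    rw [mul_one]; exact adr_rp_anti (by omega) hy)
  have h1 : e (adrIn L' 1) = adrIn L' 1 := by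
    apply he2
    intro i
    rw [adrIn_smul, mul_one, adrIn_eq_zero, hL']
    exact hvm i
  have h2 : b0 (adrIn L 1) = adrIn L' 1 := by
    rw [adrMat_in, mul_one]
  have h3 : e (b0 • adrIn L 1) = b0 • e (adrIn L 1) := map_smul e b0 _
  have h4 : b0 • e (adrIn L 1) = adrIn L' c := by
    have := adrMat_apply L' L 1 (fun y hy => by
      rw [mul_one]; exact adr_rp_anti (by omega) hy) (e (adrIn L 1)) c hc
    rw [mul_one] at this
    exact this
  rw [Module.End.smul_def, h2, h1, h4] at h3
  have h5 : (1 - c) ∈ radPow A A 1 := by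
    have : adrIn L' (1 - c) = 0 := by
      rw [adrIn, map_sub, map_sub, sub_eq_zero]; exact h3
    rw [adrIn_eq_zero, hL'] at this
    exact adr_rp_anti (by omega) this
  have hu : IsUnit c := by
    have := (adr_isNilpotent hA h5).isUnit_one_sub
    rwa [sub_sub_cancel] at this
  apply hA'
  rw [← hv, Submodule.span_eq_bot]
  rintro _ ⟨i, rfl⟩
  have h6 : v i * c = 0 := by
    have := congrArg (adrLast hA L hL) (he1 i (adrIn L 1))
    rw [map_smul, map_zero, adrLast_apply hA L hL _ c hc] at this
    exact this
  exact (hu.mul_left_eq_zero).1 h6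

lemma adr_nec [IsNoetherianRing A] (hm : 2 ≤ m) (hA : radPow A A m = ⊥)
    (h : GlDimLE2 (Module.End A (ADRModule A m))) :
    AdrRet A (ADRModule A m) ↥(jacobsonRad A) := by
  let L : Fin m := ⟨m - 1, by omega⟩
  have hL : L.1 + 1 = m := Nat.sub_add_cancel (by omega)
  have hM := adr_end_proj (adrLast hA L hL) (adrIn L 1) (adrLast_in hA L hL 1)
  obtain ⟨b, x, hx⟩ := Module.Finite.exists_fin (R := A) (M := ↥(jacobsonRad A))
  let p : (Fin b → A) →ₗ[A] ↥(jacobsonRad A) := Fintype.linearCombination A x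
  have hpa : ∀ c, p c = ∑ i, c i • x i := fun c => Fintype.linearCombination_apply A x c
  have hp : Function.Surjective p := by
    rw [← LinearMap.range_eq_top, Fintype.range_linearCombination, hx]
  obtain ⟨a, q, hq⟩ := Submodule.fg_iff_exists_fin_generating_family.1
    (IsNoetherian.noetherian (LinearMap.ker p))
  have hqk : ∀ l, p (q l) = 0 := fun l => by
    have : q l ∈ LinearMap.ker p := by rw [← hq]; exact Submodule.subset_span ⟨l, rfl⟩
    exact this
  have hw : ∀ l, ∑ i, q l i • adrIn L (x i).1 = 0 := by
    intro l
    have h1 : ∑ i, q l i * (x i).1 = 0 := by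
      have := congrArg Subtype.val (hqk l)
      rw [hpa, Submodule.coe_sum] at this
      exact this
    have h2 : ∀ i, q l i • adrIn L (x i).1 = (q l i * (x i).1) • adrIn L 1 := by
      intro i; rw [adrIn_smul, ← adrIn_eq]
    rw [Finset.sum_congr rfl fun i _ => h2 i, ← Finset.sum_smul, h1, zero_smul]
  obtain ⟨n, v, β, hv, hwv, hg⟩ := adr_le2 h hM q (fun i => adrIn L (x i).1) hw
  have hψ : ∀ k, ∃ ψ : ↥(jacobsonRad A) →ₗ[A] ADRModule A m,
      ∀ c, ψ (p c) = Fintype.linearCombination A (v k) c := by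
    intro k
    refine adr_desc p hp _ ?_
    intro c hc
    have hc' : c ∈ Submodule.span A (Set.range q) := by rw [hq]; exact hc
    have : Submodule.span A (Set.range q) ≤ LinearMap.ker (Fintype.linearCombination A (v k)) := by
      rw [Submodule.span_le]
      rintro _ ⟨l, rfl⟩
      change Fintype.linearCombination A (v k) (q l) = 0
      rw [Fintype.linearCombination_apply]
      exact hv k l
    exact this hc'
  choose ψ hψ using hψ
  have hψx : ∀ k i, ψ k (x i) = v k i := by
    intro k i
    have h1 : p (Pi.single i 1) = x i := by
      simp [p]
    rw [← h1, hψ]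
    simp
  let i0 : Fin m := ⟨0, by omega⟩
  have hq0 : ∀ y ∈ radPow A A (L.1 + 1), y * 1 ∈ radPow A A (i0.1 + 1) := fun y hy => by
    rw [mul_one]; exact adr_rp_anti (Nat.succ_le_succ (Nat.zero_le _)) hy
  have hβ : ∀ k z, adrLast hA L hL (β k z) ∈ jacobsonRad A := by
    intro k z
    obtain ⟨c, hc⟩ := adr_proj_mk L (β k z)
    have h1 := hg (adrMat i0 L 1 hq0) (fun i => by
      rw [adrMat_in, mul_one, adrIn_eq_zero]
      exact adr_rp_one.ge (x i).2) k
    have h2 : adrMat i0 L 1 hq0 (β k z) = 0 := LinearMap.congr_fun h1 z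
    rw [adrMat_apply i0 L 1 hq0 _ c hc, mul_one, adrIn_eq_zero] at h2
    rw [adrLast_apply hA L hL _ c hc]
    exact adr_rp_one.le h2
  let R : (Fin n → ADRModule A m) →ₗ[A] ↥(jacobsonRad A) :=
    ∑ k, LinearMap.codRestrict (jacobsonRad A) (adrLast hA L hL ∘ₗ β k) (hβ k) ∘ₗ LinearMap.proj k
  refine ⟨Fin n, inferInstance, LinearMap.pi ψ, R, ?_⟩
  have key : R ∘ₗ LinearMap.pi ψ = LinearMap.id := by
    refine LinearMap.ext_on_range hx fun i => Subtype.ext ?_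
    have h1 : ((R ∘ₗ LinearMap.pi ψ) (x i)).1 = ∑ k, adrLast hA L hL (β k (ψ k (x i))) := by
      simp only [R, LinearMap.comp_apply, LinearMap.sum_apply, Submodule.coe_sum]
      rfl
    rw [h1, ← map_sum, Finset.sum_congr rfl fun k _ => congrArg (β k) (hψx k i), ← hwv i,
      adrLast_in]
    rfl
  exact fun y => LinearMap.congr_fun key y

lemma adr_end_semiprimary (K : Type) [Field K] [Algebra K A] [FiniteDimensional K A] (m : ℕ) :
    IsSemiprimaryRing (Module.End A (ADRModule A m)) := by
  have : Module.Finite K (Module.End A (ADRModule A m)) :=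
    Module.Finite.of_injective (LinearMap.restrictScalarsₗ K A (ADRModule A m) (ADRModule A m) K)
      (LinearMap.restrictScalars_injective K)
  have : IsArtinianRing (Module.End A (ADRModule A m)) := IsArtinianRing.of_finite K _
  infer_instance

end NecPart
/-- for `A` of Loewy length `m ≥ 2` and `B = End_A(⊕_{j=1}^m A/J^j)` the ADR
algebra, `gl.dim B = 2` iff `J ∈ add(⊕_{j=1}^m A/J^j)`. -/
theorem stmt7 (K : Type) [Field K] (A : Type) [Ring A] [Algebra K A] [FiniteDimensional K A]
    (m : ℕ) (hm : 2 ≤ m) (hA : radPow A A m = ⊥) (hA' : radPow A A (m - 1) ≠ ⊥) :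
    (GlDimLE2 (Module.End A (ADRModule A m)) ∧ ¬ GlDimLE1 (Module.End A (ADRModule A m)))
      ↔ InAdd A (ADRModule A m) ↥(jacobsonRad A) := by
  have : IsArtinianRing A := IsArtinianRing.of_finite K A
  have : IsNoetherianRing A := IsNoetherianRing.of_finite K A
  have := adr_end_semiprimary (A := A) K m
  rw [adr_inAdd_iff]
  exact ⟨fun h => adr_nec hm hA h.1, fun h => ⟨adr_suff hA h, adr_not_le1 hm hA hA'⟩⟩
end

section
/- Let A be an artin algebra with Jacobson radical J and Loewy length m ≥ 2, and B the ADR algebra End_A(⊕_{j=1}^m A/J^j). Then gl B ≤ m. (The chain of subcategories C_i = add(⊕_{j=1}^{m-i} (A/J^m)-quotients of Loewy length ≤ m−i) … concretely: add(⊕_{j=1}^m A/J^j) ⊃ add(⊕_{j=1}^{m-1} A/J^j) ⊃ … ⊃ add(A/J) ⊃ 0 is an A-total left rejective chain of length m, yielding the bound.) -/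
/-- `pdLE B n M` : the `B`-module `M` admits a projective resolution of length at most `n`. -/
def pdLE (B : Type) [Ring B] : ℕ → (M : Type) → [AddCommGroup M] → [Module B M] → Prop
  | 0, M, _, _ => Module.Projective B M
  | n + 1, M, _, _ => ∃ (P : Type) (_ : AddCommGroup P) (_ : Module B P),
      Module.Projective B P ∧ ∃ s : P →ₗ[B] M, Function.Surjective s ∧
        pdLE B n ↥(LinearMap.ker s)


section Homological
open CategoryTheory

/-- Projective dimension `< n`, for unbundled modules. -/
def PDLT (B : Type) [Ring B] (n : ℕ) (X : Type) [AddCommGroup X] [Module B X] : Prop :=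
  HasProjectiveDimensionLT (ModuleCat.of B X) n

variable {B : Type} [Ring B]

lemma PDLT.mono {n k : ℕ} (h : n ≤ k) {X : Type} [AddCommGroup X] [Module B X]
    (hX : PDLT B n X) : PDLT B k X := by
  have : HasProjectiveDimensionLT (ModuleCat.of B X) n := hX
  exact hasProjectiveDimensionLT_of_ge _ n k h

lemma PDLT.one_iff {X : Type} [AddCommGroup X] [Module B X] :
    PDLT B 1 X ↔ Module.Projective B X := by
  rw [PDLT, ← projective_iff_hasProjectiveDimensionLT_one, IsProjective.iff_projective]

lemma PDLT.retract {n : ℕ} {X Y : Type} [AddCommGroup X] [Module B X] [AddCommGroup Y] [Module B Y]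
    (hX : PDLT B n X) (i : Y →ₗ[B] X) (r : X →ₗ[B] Y) (h : r ∘ₗ i = LinearMap.id) :
    PDLT B n Y := by
  have : HasProjectiveDimensionLT (ModuleCat.of B X) n := hX
  have R : Retract (ModuleCat.of B Y) (ModuleCat.of B X) :=
    { i := ModuleCat.ofHom i
      r := ModuleCat.ofHom r
      retract := by rw [← ModuleCat.ofHom_comp, h]; rfl }
  exact R.hasProjectiveDimensionLT n

lemma pdlt_mid {n : ℕ} {X Y Z : Type} [AddCommGroup X] [Module B X] [AddCommGroup Y] [Module B Y]
    [AddCommGroup Z] [Module B Z] (f : X →ₗ[B] Y) (g : Y →ₗ[B] Z) (hf : Function.Injective f)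
    (hg : Function.Surjective g) (he : Function.Exact f g) (hX : PDLT B n X) (hZ : PDLT B n Z) :
    PDLT B n Y :=
  (ModuleCat.shortComplex_shortExact
    (ShortComplex.mk (ModuleCat.ofHom f) (ModuleCat.ofHom g) (by
      rw [← ModuleCat.ofHom_comp, he.linearMap_comp_eq_zero]; rfl)) he hf hg).hasProjectiveDimensionLT_X₂
    n hX hZ

lemma pdlt_right {n : ℕ} {X Y Z : Type} [AddCommGroup X] [Module B X] [AddCommGroup Y] [Module B Y]
    [AddCommGroup Z] [Module B Z] (f : X →ₗ[B] Y) (g : Y →ₗ[B] Z) (hf : Function.Injective f)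
    (hg : Function.Surjective g) (he : Function.Exact f g) (hX : PDLT B n X)
    (hY : PDLT B (n + 1) Y) : PDLT B (n + 1) Z :=
  (ModuleCat.shortComplex_shortExact
    (ShortComplex.mk (ModuleCat.ofHom f) (ModuleCat.ofHom g) (by
      rw [← ModuleCat.ofHom_comp, he.linearMap_comp_eq_zero]; rfl)) he hf hg).hasProjectiveDimensionLT_X₃
    n hX hY

lemma pdlt_left {n : ℕ} {X Y Z : Type} [AddCommGroup X] [Module B X] [AddCommGroup Y] [Module B Y]
    [AddCommGroup Z] [Module B Z] (f : X →ₗ[B] Y) (g : Y →ₗ[B] Z) (hf : Function.Injective f)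
    (hg : Function.Surjective g) (he : Function.Exact f g) (hY : PDLT B n Y)
    (hZ : PDLT B (n + 1) Z) : PDLT B n X :=
  (ModuleCat.shortComplex_shortExact
    (ShortComplex.mk (ModuleCat.ofHom f) (ModuleCat.ofHom g) (by
      rw [← ModuleCat.ofHom_comp, he.linearMap_comp_eq_zero]; rfl)) he hf hg).hasProjectiveDimensionLT_X₁
    n hY hZ

lemma exact_sub {X : Type} [AddCommGroup X] [Module B X] (S : Submodule B X) :
    Function.Exact S.subtype S.mkQ := by
  rw [LinearMap.exact_iff]; simp

lemma pdlt_ext {n : ℕ} {X : Type} [AddCommGroup X] [Module B X] (S : Submodule B X)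
    (h1 : PDLT B n S) (h2 : PDLT B n (X ⧸ S)) : PDLT B n X :=
  pdlt_mid S.subtype S.mkQ S.injective_subtype S.mkQ_surjective (exact_sub S) h1 h2

lemma pdlt_quot {n : ℕ} {X : Type} [AddCommGroup X] [Module B X] (S : Submodule B X)
    (h1 : PDLT B n S) (h2 : PDLT B (n + 1) X) : PDLT B (n + 1) (X ⧸ S) :=
  pdlt_right S.subtype S.mkQ S.injective_subtype S.mkQ_surjective (exact_sub S) h1 h2

/-- Extension of nested submodules `P ≤ Q`. -/
lemma pdlt_nested {n : ℕ} {X : Type} [AddCommGroup X] [Module B X] (P Q : Submodule B X)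
    (h : P ≤ Q) (h1 : PDLT B n P) (h2 : PDLT B n (Q ⧸ P.submoduleOf Q)) : PDLT B n Q := by
  refine pdlt_ext (P.submoduleOf Q) ?_ h2
  exact h1.retract (Submodule.submoduleOfEquivOfLe h).toLinearMap
    (Submodule.submoduleOfEquivOfLe h).symm.toLinearMap (by ext; simp)

lemma pdLE_of_pdlt : ∀ (n : ℕ) (X : Type) [AddCommGroup X] [Module B X],
    PDLT B (n + 1) X → pdLE B n X
  | 0, X, _, _, h => PDLT.one_iff.1 h
  | n + 1, X, _, _, h => by
    have hs : Function.Surjective (Finsupp.linearCombination B (id : X → X)) :=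
      Finsupp.linearCombination_id_surjective B X
    refine ⟨X →₀ B, inferInstance, inferInstance, inferInstance,
      Finsupp.linearCombination B (id : X → X), hs, pdLE_of_pdlt n _ ?_⟩
    refine pdlt_left (LinearMap.ker _).subtype (Finsupp.linearCombination B (id : X → X))
      (Submodule.injective_subtype _) hs (by rw [LinearMap.exact_iff]; simp) ?_ h
    exact PDLT.mono (by omega) (PDLT.one_iff.2 inferInstance)

end Homological

section AbstractStep

/-- The module `N` is annihilated by `e i`, for all `i < k`. -/
def KilledBelow {B : Type} [Ring B] (e : ℕ → B) (k : ℕ) (N : Type) [AddCommGroup N]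
    [Module B N] : Prop :=
  ∀ i < k, ∀ n : N, e i • n = 0

variable {B : Type} [Ring B]

lemma semisimple_of_killed [IsSemiprimaryRing B] (X : Type) [AddCommGroup X] [Module B X]
    (h : Module.IsTorsionBySet B X (Ring.jacobson B : Set B)) : IsSemisimpleModule B X := by
  let _ := h.module
  have := ((isSemiprimaryRing_iff B).mp ‹_›).1
  exact h.isSemisimpleModule_iff.1 inferInstance

lemma projective_finsupp (ι : Type) (P : Type) [AddCommGroup P] [Module B P]
    [Module.Projective B P] : Module.Projective B (ι →₀ P) := by
  classical
  exact Module.Projective.of_equiv (finsuppLequivDFinsupp (ι := ι) (M := P) B).symm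

lemma abstract_step_semisimple [IsSemiprimaryRing B] (e : ℕ → B) (k d : ℕ) (hd : 1 ≤ d)
    (P : Type) [AddCommGroup P] [Module B P] [Module.Projective B P]
    (P0 : Submodule B P) [Module.Projective B P0] (τ : P →ₗ[B] B) (s : P)
    (hs : τ s = e k) (hτ : ∀ x, τ x = τ x * e k)
    (hτ0 : ∀ x ∈ P0, τ x = 0 ∨ ∃ i < k, ∃ b c : B, τ x = b * e i * c)
    (h3 : ∀ i < k, ∀ x : P, e i • x ∈ P0)
    (h4 : ∀ b ∈ Ring.jacobson B, ∀ x : P, e k • b • x ∈ P0)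
    (ih : ∀ (N : Type) [AddCommGroup N] [Module B N], KilledBelow e (k + 1) N → PDLT B d N)
    (N : Type) [AddCommGroup N] [Module B N]
    (hJ : Module.IsTorsionBySet B N (Ring.jacobson B : Set B))
    (hN : KilledBelow e k N) : PDLT B (d + 1) N := by
  classical
  have := projective_finsupp (B := B) N P
  have := projective_finsupp (B := B) N P0
  let N' : Submodule B N := Submodule.span B {y | ∃ n : N, y = e k • n}
  refine pdlt_ext N' ?_ (PDLT.mono (Nat.le_succ d) (ih _ ?_))
  swap
  · intro i hi n
    obtain ⟨n, rfl⟩ := N'.mkQ_surjective n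
    rw [← map_smul]
    rcases Nat.lt_succ_iff_lt_or_eq.1 hi with h | rfl
    · rw [hN i h, map_zero]
    · exact (Submodule.Quotient.mk_eq_zero N').2 (Submodule.subset_span ⟨n, rfl⟩)
  -- the cover
  let Φ : (N →₀ P) →ₗ[B] N :=
    Finsupp.lsum ℕ (fun n : N => (LinearMap.toSpanSingleton B N n) ∘ₗ τ)
  have hΦs : ∀ n x, Φ (Finsupp.single n x) = τ x • n := by
    intro n x; simp [Φ]
  have hΦr : LinearMap.range Φ = N' := by
    apply le_antisymm
    · rintro _ ⟨f, rfl⟩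
      induction f using Finsupp.induction_linear with
      | zero => simp
      | add f g hf hg => rw [map_add]; exact add_mem hf hg
      | single n x =>
        rw [hΦs, hτ, mul_smul]
        exact N'.smul_mem _ (Submodule.subset_span ⟨n, rfl⟩)
    · refine Submodule.span_le.2 ?_
      rintro _ ⟨n, rfl⟩
      exact ⟨Finsupp.single n s, by rw [hΦs, hs]⟩
  let X0 : Submodule B (N →₀ P) := LinearMap.range (Finsupp.mapRange.linearMap (α := N) P0.subtype)
  have hX0 : ∀ f : N →₀ P, (∀ n, f n ∈ P0) → f ∈ X0 := by
    intro f hf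
    rw [← Finsupp.sum_single f]
    refine Submodule.sum_mem _ fun n _ => ?_
    exact ⟨Finsupp.single n ⟨f n, hf n⟩, by simp⟩
  have hX0' : ∀ f ∈ X0, ∀ n, f n ∈ P0 := by
    rintro _ ⟨f, rfl⟩ n
    simp
  let Q : Submodule B (N →₀ P) := X0 ⊔ Ring.jacobson B • ⊤
  have hQ : PDLT B d Q := by
    refine pdlt_nested X0 Q le_sup_left (PDLT.mono hd (PDLT.one_iff.2 ?_)) (ih _ ?_)
    · refine Module.Projective.of_equiv (LinearEquiv.ofInjective
        (Finsupp.mapRange.linearMap (α := N) P0.subtype) ?_)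
      exact Finsupp.mapRange_injective _ (map_zero _) P0.injective_subtype
    · intro i hi q
      obtain ⟨⟨q, hq⟩, rfl⟩ := Submodule.mkQ_surjective _ q
      rw [← map_smul]
      refine (Submodule.Quotient.mk_eq_zero _).2 ?_
      change e i • q ∈ X0
      rcases Nat.lt_succ_iff_lt_or_eq.1 hi with h | rfl
      · exact hX0 _ fun n => h3 i h _
      · obtain ⟨u, hu, w, hw, rfl⟩ := Submodule.mem_sup.1 hq
        rw [smul_add]
        refine add_mem (X0.smul_mem _ hu) ?_
        refine Submodule.smul_induction_on hw ?_ ?_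
        · intro b hb f _
          exact hX0 _ fun n => h4 b hb _
        · intro x y hx hy
          rw [smul_add]; exact add_mem hx hy
  have hXQ : PDLT B (d + 1) ((N →₀ P) ⧸ Q) :=
    pdlt_quot Q hQ (PDLT.mono (by omega) (PDLT.one_iff.2 inferInstance))
  have hker : Q ≤ LinearMap.ker Φ := by
    refine sup_le ?_ ?_
    · intro f hf
      have := hX0' f hf
      rw [LinearMap.mem_ker, ← Finsupp.sum_single f, Finsupp.sum, map_sum]
      refine Finset.sum_eq_zero fun n _ => ?_
      rw [hΦs]
      rcases hτ0 _ (this n) with h | ⟨i, hi, b, c, h⟩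
      · rw [h, zero_smul]
      · rw [h, mul_smul, mul_smul, hN i hi, smul_zero]
    · refine Submodule.smul_le.2 fun b hb f _ => ?_
      rw [LinearMap.mem_ker, map_smul]
      exact hJ (x := Φ f) (a := ⟨b, hb⟩)
  let Ψ : ((N →₀ P) ⧸ Q) →ₗ[B] N' :=
    Q.liftQ (Φ.codRestrict N' fun f => hΦr ▸ LinearMap.mem_range_self Φ f) (by
      rw [LinearMap.ker_codRestrict]; exact hker)
  have hΨ : Function.Surjective Ψ := by
    rintro ⟨y, hy⟩
    rw [← hΦr] at hy
    obtain ⟨f, rfl⟩ := hy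
    exact ⟨Q.mkQ f, Subtype.ext (by simp [Ψ])⟩
  have : IsSemisimpleModule B ((N →₀ P) ⧸ Q) := by
    apply semisimple_of_killed
    rw [Module.isTorsionBySet_quotient_iff]
    intro f b hb
    exact le_sup_right (a := X0) (Submodule.smul_mem_smul hb trivial)
  obtain ⟨σ, hσ⟩ := IsSemisimpleModule.lifting_property Ψ hΨ LinearMap.id
  exact hXQ.retract σ Ψ hσ

lemma KilledBelow.sub {e : ℕ → B} {k : ℕ} {N : Type} [AddCommGroup N] [Module B N]
    (h : KilledBelow e k N) (S : Submodule B N) : KilledBelow e k S :=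
  fun i hi n => Subtype.ext (h i hi n)

lemma KilledBelow.quot {e : ℕ → B} {k : ℕ} {N : Type} [AddCommGroup N] [Module B N]
    (h : KilledBelow e k N) (S : Submodule B N) : KilledBelow e k (N ⧸ S) := by
  intro i hi n
  obtain ⟨n, rfl⟩ := S.mkQ_surjective n
  rw [← map_smul, h i hi, map_zero]

lemma abstract_step [IsSemiprimaryRing B] (e : ℕ → B) (k d : ℕ) (hd : 1 ≤ d)
    (P : Type) [AddCommGroup P] [Module B P] [Module.Projective B P]
    (P0 : Submodule B P) [Module.Projective B P0] (τ : P →ₗ[B] B) (s : P)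
    (hs : τ s = e k) (hτ : ∀ x, τ x = τ x * e k)
    (hτ0 : ∀ x ∈ P0, τ x = 0 ∨ ∃ i < k, ∃ b c : B, τ x = b * e i * c)
    (h3 : ∀ i < k, ∀ x : P, e i • x ∈ P0)
    (h4 : ∀ b ∈ Ring.jacobson B, ∀ x : P, e k • b • x ∈ P0)
    (ih : ∀ (N : Type) [AddCommGroup N] [Module B N], KilledBelow e (k + 1) N → PDLT B d N)
    (N : Type) [AddCommGroup N] [Module B N]
    (hN : KilledBelow e k N) : PDLT B (d + 1) N := by
  revert hN
  refine IsSemiprimaryRing.induction ℤ B N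
    (P := fun N _ _ _ => KilledBelow e k N → PDLT B (d + 1) N) ?_ ?_
  · intro M _ _ _ _ _ hJ hM
    exact abstract_step_semisimple e k d hd P P0 τ s hs hτ hτ0 h3 h4 ih M hJ hM
  · intro M _ _ _ _ S h1 h2 hM
    exact pdlt_ext S (h1 (hM.sub S)) (h2 (hM.quot S))
end AbstractStep

section RadPow
variable {A : Type} [Ring A]

lemma radPow_smul_right (k : ℕ) {a : A} (ha : a ∈ radPow A A k) (b : A) :
    a * b ∈ radPow A A k := by
  induction k generalizing a with
  | zero => exact Submodule.mem_top
  | succ k ih =>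
    change a ∈ Submodule.span A _ at ha
    change a * b ∈ Submodule.span A _
    induction ha using Submodule.span_induction with
    | mem x hx =>
      obtain ⟨c, hc, y, hy, rfl⟩ := hx
      refine Submodule.subset_span ⟨c, hc, y * b, ih hy, ?_⟩
      simp [mul_assoc]
    | zero => rw [zero_mul]; exact zero_mem _
    | add x y _ _ hx hy => rw [add_mul]; exact add_mem hx hy
    | smul c x _ hx => rw [smul_mul_assoc]; exact Submodule.smul_mem _ c hx

lemma radPow_mul_jac (k : ℕ) {a b : A} (ha : a ∈ radPow A A k) (hb : b ∈ jacobsonRad A) :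
    a * b ∈ radPow A A (k + 1) := by
  induction k generalizing a with
  | zero =>
    have : b ∈ radPow A A 1 := Submodule.subset_span ⟨b, hb, 1, Submodule.mem_top, by simp⟩
    exact Submodule.smul_mem _ a this
  | succ k ih =>
    change a ∈ Submodule.span A _ at ha
    change a * b ∈ Submodule.span A _
    induction ha using Submodule.span_induction with
    | mem x hx =>
      obtain ⟨c, hc, y, hy, rfl⟩ := hx
      refine Submodule.subset_span ⟨c, hc, y * b, ih hy, ?_⟩
      simp [mul_assoc]
    | zero => rw [zero_mul]; exact zero_mem _
    | add x y _ _ hx hy => rw [add_mul]; exact add_mem hx hy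
    | smul c x _ hx => rw [smul_mul_assoc]; exact Submodule.smul_mem _ c hx

lemma jac_two_sided {a : A} (ha : a ∈ jacobsonRad A) (b : A) : a * b ∈ jacobsonRad A :=
  Ideal.mul_mem_right (I := Ideal.jacobson (⊥ : Ideal A)) b ha

lemma radPow_succ_le_jac (k : ℕ) : radPow A A (k + 1) ≤ jacobsonRad A := by
  refine Submodule.span_le.2 ?_
  rintro _ ⟨a, ha, y, _, rfl⟩
  exact jac_two_sided ha y

lemma radPow_antitone : Antitone (radPow A A) := antitone_nat_of_succ_le (radPow_succ_le A A)

end RadPow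

section Concrete
variable (A : Type) [Ring A] (m : ℕ)

/-- The elements of the ADR module annihilated by `J^k`, as a submodule over the ADR algebra. -/
def annSub (k : ℕ) : Submodule (Module.End A (ADRModule A m)) (ADRModule A m) where
  carrier := {x | ∀ a ∈ radPow A A k, a • x = 0}
  add_mem' := by
    intro x y hx hy a ha
    rw [smul_add, hx a ha, hy a ha, add_zero]
  zero_mem' := fun a _ => smul_zero a
  smul_mem' := by
    intro b x hx a ha
    change a • b x = 0
    rw [← map_smul, hx a ha, map_zero]

/-- The map sending `x` (annihilated by `J^(j+1)`) to `M → A/J^(j+1) → M`, `1 ↦ x`. -/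
def tauFun (j : Fin m) (x : annSub A m (j.1 + 1)) : Module.End A (ADRModule A m) :=
  (radPow A A (j.1 + 1)).liftQ (LinearMap.toSpanSingleton A (ADRModule A m) x.1)
    (fun a ha => x.2 a ha) ∘ₗ LinearMap.proj j

lemma tauFun_apply (j : Fin m) (x : annSub A m (j.1 + 1)) (v : ADRModule A m) (a : A)
    (h : v j = Submodule.Quotient.mk a) : tauFun A m j x v = a • x.1 := by
  rw [tauFun, LinearMap.comp_apply, LinearMap.proj_apply, h]
  rfl

/-- `tauFun` as a linear map over the ADR algebra. -/
def tau (j : Fin m) : annSub A m (j.1 + 1) →ₗ[Module.End A (ADRModule A m)]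
    Module.End A (ADRModule A m) where
  toFun x := tauFun A m j x
  map_add' x y := by
    refine LinearMap.ext fun v => ?_
    obtain ⟨a, ha⟩ := Submodule.Quotient.mk_surjective _ (v j)
    rw [LinearMap.add_apply, tauFun_apply A m j _ v a ha.symm, tauFun_apply A m j _ v a ha.symm,
      tauFun_apply A m j _ v a ha.symm, ← smul_add]
    rfl
  map_smul' b x := by
    refine LinearMap.ext fun v => ?_
    obtain ⟨a, ha⟩ := Submodule.Quotient.mk_surjective _ (v j)
    rw [RingHom.id_apply, smul_eq_mul, Module.End.mul_apply, tauFun_apply A m j _ v a ha.symm,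
      tauFun_apply A m j _ v a ha.symm, map_smul]
    rfl

variable {A m}

lemma tau_apply (j : Fin m) (x : annSub A m (j.1 + 1)) (v : ADRModule A m) (a : A)
    (h : v j = Submodule.Quotient.mk a) : tau A m j x v = a • x.1 :=
  tauFun_apply A m j x v a h

/-- the generator of the `j`-th summand -/
def sgen (j : Fin m) : annSub A m (j.1 + 1) :=
  ⟨Pi.single j (Submodule.Quotient.mk 1), by
    intro a ha
    rw [← Pi.single_smul, ← Submodule.Quotient.mk_smul, smul_eq_mul, mul_one,
      (Submodule.Quotient.mk_eq_zero _).2 ha, Pi.single_zero]⟩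

lemma smul_sgen (j : Fin m) (a : A) :
    a • (sgen j : annSub A m (j.1 + 1)).1 = Pi.single j (Submodule.Quotient.mk a) := by
  rw [sgen, ← Pi.single_smul, ← Submodule.Quotient.mk_smul, smul_eq_mul, mul_one]

lemma sgen_self (j : Fin m) :
    (sgen j : annSub A m (j.1 + 1)).1 j = Submodule.Quotient.mk 1 :=
  Pi.single_eq_same _ _

lemma tau_sgen_apply (j : Fin m) (v : ADRModule A m) :
    tau A m j (sgen j) v = Pi.single j (v j) := by
  obtain ⟨a, ha⟩ := Submodule.Quotient.mk_surjective _ (v j)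
  rw [tau_apply j _ v a ha.symm, smul_sgen, ha]

lemma tau_mul (j : Fin m) (x : annSub A m (j.1 + 1)) :
    tau A m j x = tau A m j x * tau A m j (sgen j) := by
  refine LinearMap.ext fun v => ?_
  obtain ⟨a, ha⟩ := Submodule.Quotient.mk_surjective _ (v j)
  rw [Module.End.mul_apply, tau_sgen_apply, tau_apply j x v a ha.symm, tau_apply j x _ a]
  rw [Pi.single_eq_same, ha]

instance annSub_projective (j : Fin m) :
    Module.Projective (Module.End A (ADRModule A m)) (annSub A m (j.1 + 1)) := by
  refine Module.Projective.of_split (tau A m j)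
    (LinearMap.toSpanSingleton _ _ (sgen j)) ?_
  refine LinearMap.ext fun x => Subtype.ext ?_
  change tau A m j x (sgen j).1 = x.1
  rw [tau_apply j x _ 1, one_smul]
  simp [sgen]

lemma annSub_zero : annSub A m 0 = ⊥ := by
  rw [eq_bot_iff]
  intro x hx
  have := hx 1 Submodule.mem_top
  rwa [one_smul] at this

lemma annSub_projective' (k : ℕ) (hk : k ≤ m) :
    Module.Projective (Module.End A (ADRModule A m)) (annSub A m k) := by
  cases k with
  | zero =>
    rw [annSub_zero]; infer_instance
  | succ k => exact annSub_projective ⟨k, hk⟩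

lemma annSub_mono : Monotone (annSub A m) :=
  fun _ _ h _ hx a ha => hx a (radPow_antitone h ha)

lemma single_mem_annSub (i : Fin m) (k : ℕ) (a : A)
    (h : ∀ c ∈ radPow A A k, c * a ∈ radPow A A (i.1 + 1)) :
    (Pi.single i (Submodule.Quotient.mk a) : ADRModule A m) ∈ annSub A m k := by
  intro c hc
  rw [← Pi.single_smul, ← Submodule.Quotient.mk_smul, smul_eq_mul,
      (Submodule.Quotient.mk_eq_zero _).2 (h c hc), Pi.single_zero]

lemma tau_low (i j : Fin m) (hij : i.1 + 1 ≤ j.1 + 1) (x : ADRModule A m)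
    (hx : x ∈ annSub A m (i.1 + 1)) (hx' : x ∈ annSub A m (j.1 + 1)) :
    ∃ c : Module.End A (ADRModule A m),
      tau A m j ⟨x, hx'⟩ = tau A m i ⟨x, hx⟩ * tau A m i (sgen i) * c := by
  have hy : (sgen i).1 ∈ annSub A m (j.1 + 1) := annSub_mono hij (sgen i).2
  refine ⟨tau A m j ⟨_, hy⟩, ?_⟩
  rw [← tau_mul]
  refine LinearMap.ext fun v => ?_
  obtain ⟨a, ha⟩ := Submodule.Quotient.mk_surjective _ (v j)
  rw [Module.End.mul_apply, tau_apply j _ v a ha.symm, tau_apply j _ v a ha.symm]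
  have h : (a • (sgen i : annSub A m (i.1 + 1)).1 : ADRModule A m) i =
      Submodule.Quotient.mk a := by
    rw [smul_sgen, Pi.single_eq_same]
  rw [tau_apply i _ _ a h]

lemma jac_component (hB : IsSemiprimaryRing (Module.End A (ADRModule A m))) (j : Fin m)
    (g : Module.End A (ADRModule A m)) (hg : g ∈ Ring.jacobson (Module.End A (ADRModule A m)))
    (a : A) (ha : g (sgen j).1 = Pi.single j (Submodule.Quotient.mk a)) :
    a ∈ jacobsonRad A := by
  obtain ⟨n, hn⟩ := ((isSemiprimaryRing_iff _).mp hB).2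
  have hnil : ∀ x ∈ Ring.jacobson (Module.End A (ADRModule A m)), IsNilpotent x :=
    fun x hx => ⟨n, by simpa [hn] using Ideal.pow_mem_pow hx n⟩
  rw [jacobsonRad, ← Ideal.jacobson_idem, Ideal.mem_jacobson_iff]
  intro y
  have hy : (Pi.single j (Submodule.Quotient.mk y) : ADRModule A m) ∈ annSub A m (j.1 + 1) :=
    single_mem_annSub j _ y fun c hc => radPow_smul_right _ hc y
  let c := tau A m j ⟨_, hy⟩
  have hgc : g * c ∈ Ring.jacobson (Module.End A (ADRModule A m)) := Ideal.mul_mem_right _ _ hg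
  obtain ⟨z, hz⟩ := (hnil _ hgc).isUnit_one_add.exists_right_inv
  obtain ⟨d, hd⟩ := Submodule.Quotient.mk_surjective _ (z (sgen j).1 j)
  refine ⟨d, radPow_succ_le_jac j.1 ?_⟩
  have h1 := congrFun (LinearMap.congr_fun hz (sgen j).1) j
  have h2 : c (z (sgen j).1) = (d * y) • (sgen j).1 := by
    rw [tau_apply j _ _ d hd.symm, mul_smul, smul_sgen]
  rw [Module.End.mul_apply, LinearMap.add_apply, Module.End.mul_apply, h2, map_smul, ha] at h1
  rw [Module.End.one_apply, Pi.add_apply, Module.End.one_apply, ← hd, ← Pi.single_smul,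
    Pi.single_eq_same, ← one_smul A (sgen j).1, smul_sgen, Pi.single_eq_same,
    ← Submodule.Quotient.mk_smul, ← Submodule.Quotient.mk_add, smul_eq_mul] at h1
  rw [Submodule.Quotient.eq] at h1
  convert h1 using 1
  abel

open Classical in
/-- The idempotents. -/
noncomputable def eidem (A : Type) [Ring A] (m : ℕ) (i : ℕ) : Module.End A (ADRModule A m) :=
  if h : i < m then tau A m ⟨i, h⟩ (sgen ⟨i, h⟩) else 0

lemma main_bound (hB : IsSemiprimaryRing (Module.End A (ADRModule A m))) :
    ∀ (d k : ℕ), k + d = m → ∀ (N : Type) [AddCommGroup N]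
      [Module (Module.End A (ADRModule A m)) N],
      KilledBelow (eidem A m) k N → PDLT (Module.End A (ADRModule A m)) (d + 1) N
  | 0, k, hk, N, _, _, hN => by
    obtain rfl : k = m := hk
    have h1 : (1 : Module.End A (ADRModule A k)) = ∑ i : Fin k, eidem A k i.1 := by
      refine LinearMap.ext fun v => ?_
      simp only [eidem, Fin.is_lt, dite_true, Fin.eta, LinearMap.sum_apply, tau_sgen_apply]
      exact (Finset.univ_sum_single v).symm
    have : Subsingleton N := by
      refine subsingleton_of_forall_eq 0 fun n => ?_
      rw [← one_smul (Module.End A (ADRModule A k)) n, h1, Finset.sum_smul]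
      exact Finset.sum_eq_zero fun i _ => hN i.1 i.2 n
    exact PDLT.one_iff.2 inferInstance
  | d + 1, k, hk, N, _, _, hN => by
    have hkm : k < m := by omega
    have hek : eidem A m k = tau A m ⟨k, hkm⟩ (sgen ⟨k, hkm⟩) := by simp [eidem, hkm]
    have : Module.Projective (Module.End A (ADRModule A m)) (annSub A m (k + 1)) :=
      annSub_projective' _ hkm
    have : Module.Projective (Module.End A (ADRModule A m))
        ((annSub A m k).submoduleOf (annSub A m (k + 1))) := by
      have := annSub_projective' (A := A) (m := m) k hkm.le
      exact Module.Projective.of_equiv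
        (Submodule.submoduleOfEquivOfLe (annSub_mono (A := A) (m := m) (Nat.le_succ k))).symm
    refine abstract_step (eidem A m) k (d + 1) (by omega) (annSub A m (k + 1))
      ((annSub A m k).submoduleOf (annSub A m (k + 1))) (tau A m ⟨k, hkm⟩) (sgen ⟨k, hkm⟩)
      hek.symm (fun x => by rw [hek]; exact tau_mul ⟨k, hkm⟩ x) ?_ ?_ ?_
      (main_bound hB (d) (k + 1) (by omega)) N hN
    · rintro ⟨x, hx'⟩ hx
      change x ∈ annSub A m k at hx
      cases k with
      | zero =>
        left
        rw [annSub_zero] at hx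
        obtain rfl : x = 0 := hx
        exact map_zero (tau A m ⟨0, hkm⟩)
      | succ k =>
        right
        obtain ⟨c, hc⟩ := tau_low ⟨k, by omega⟩ ⟨k + 1, hkm⟩ (Nat.le_succ _) x hx hx'
        refine ⟨k, Nat.lt_succ_self k, tau A m ⟨k, by omega⟩ ⟨x, hx⟩, c, ?_⟩
        have : eidem A m k = tau A m ⟨k, by omega⟩ (sgen ⟨k, by omega⟩) := by
          simp [eidem, show k < m by omega]
        rw [this]
        exact hc
    · rintro i hi ⟨x, hx⟩
      have : eidem A m i = tau A m ⟨i, by omega⟩ (sgen ⟨i, by omega⟩) := by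
        simp [eidem, show i < m by omega]
      change eidem A m i x ∈ annSub A m k
      rw [this, tau_sgen_apply]
      obtain ⟨a, ha⟩ := Submodule.Quotient.mk_surjective _ (x ⟨i, by omega⟩)
      rw [← ha]
      exact single_mem_annSub _ _ _ fun c hc =>
        radPow_smul_right _ (radPow_antitone (Nat.succ_le_of_lt hi) hc) a
    · intro b hb x
      change eidem A m k (b x.1) ∈ annSub A m k
      rw [hek, tau_sgen_apply]
      obtain ⟨a, ha⟩ := Submodule.Quotient.mk_surjective _ ((b x.1) ⟨k, hkm⟩)
      rw [← ha]
      refine single_mem_annSub _ _ _ fun c hc => radPow_mul_jac k hc ?_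
      refine jac_component hB ⟨k, hkm⟩
        (tau A m ⟨k, hkm⟩ (sgen ⟨k, hkm⟩) * (b * tau A m ⟨k, hkm⟩ x)) ?_ a ?_
      · exact Ideal.mul_mem_left _ _ (Ideal.mul_mem_right _ _ hb)
      · rw [Module.End.mul_apply, Module.End.mul_apply, tau_sgen_apply, tau_apply ⟨k, hkm⟩ x _ 1 (sgen_self _),
          one_smul, ha]

end Concrete

lemma adr_semiprimary (K : Type) [Field K] (A : Type) [Ring A] [Algebra K A]
    [FiniteDimensional K A] (m : ℕ) : IsSemiprimaryRing (Module.End A (ADRModule A m)) := by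
  have h1 : ∀ j : Fin m, Module.Finite K (A ⧸ radPow A A (j.1 + 1)) := by
    intro j
    generalize radPow A A (j.1 + 1) = I
    exact Module.Finite.of_surjective (I.mkQ.restrictScalars K) I.mkQ_surjective
  have h2 : Module.Finite K (ADRModule A m) := inferInstance
  have h3 : Module.Finite K (Module.End A (ADRModule A m)) :=
    Module.Finite.of_injective
      (LinearMap.restrictScalarsₗ K A (ADRModule A m) (ADRModule A m) K)
      (LinearMap.restrictScalars_injective K)
  have : IsArtinianRing (Module.End A (ADRModule A m)) := IsArtinianRing.of_finite K _
  infer_instance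

/-- for `A` of Loewy length `m ≥ 2`, the ADR algebra
`B = End_A(⊕_{j=1}^m A/J^j)` has global dimension at most `m`: every `B`-module has
projective dimension at most `m`. -/
theorem stmt15 (K : Type) [Field K] (A : Type) [Ring A] [Algebra K A] [FiniteDimensional K A]
    (m : ℕ) (hm : 2 ≤ m) (hA : radPow A A m = ⊥) (hA' : radPow A A (m - 1) ≠ ⊥) :
    ∀ (N : Type) [AddCommGroup N] [Module (Module.End A (ADRModule A m)) N],
      pdLE (Module.End A (ADRModule A m)) m N := by
  intro N _ _
  refine pdLE_of_pdlt m N (main_bound (adr_semiprimary K A m) m 0 (Nat.zero_add m) N ?_)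
  intro i hi
  exact absurd hi (Nat.not_lt_zero i)
end
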